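/- Let N be a continuous nest on a separable infinite-dimensional complex Hilbert space, let O be a stable net of families of intervals of N, and let I be the kernel of O. Then for every X ∈ Alg N the quotient norm is given by dist(X, I) = lim_{P∈O} sup_{E∈P} ‖EXE‖_e. -/

import Mathlib

open Set Filter Topology

noncomputable def essNorm {H : Type*} [NormedAddCommGroup H] [InnerProductSpace ℂ H]
    [CompleteSpace H] (T : H →L[ℂ] H) : ℝ :=
  Metric.infDist T {K : H →L[ℂ] H | IsCompactOperator ⇑K}

/-- A continuous nest on `H`, parameterized by `[0,1]`: an increasing family of orthogonal
projections `N t` whose ranges strictly increase, with `N 0 = 0`, `N 1 = 1`, and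
`t ↦ N t ξ` norm-continuous on `[0,1]` for every `ξ`. -/
structure ContinuousNest (H : Type*) [NormedAddCommGroup H] [InnerProductSpace ℂ H]
    [CompleteSpace H] where
  N : ℝ → H →L[ℂ] H
  idem : ∀ t ∈ Icc (0 : ℝ) 1, IsIdempotentElem (N t)
  selfAdjoint : ∀ t ∈ Icc (0 : ℝ) 1, IsSelfAdjoint (N t)
  range_lt : ∀ s t : ℝ, s ∈ Icc (0 : ℝ) 1 → t ∈ Icc (0 : ℝ) 1 → s < t →
    LinearMap.range (N s).toLinearMap < LinearMap.range (N t).toLinearMap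
  N_zero : N 0 = 0
  N_one : N 1 = 1
  contOn : ∀ ξ : H, ContinuousOn (fun t => N t ξ) (Icc (0 : ℝ) 1)

variable {H : Type*} [NormedAddCommGroup H] [InnerProductSpace ℂ H] [CompleteSpace H]

/-- `P₁` refines `P₂`: every interval of `P₁` is dominated by an interval of `P₂`
(in the Loewner order). -/
def OpRefines (P₁ P₂ : Set (H →L[ℂ] H)) : Prop :=
  ∀ E ∈ P₁, ∃ F ∈ P₂, ContinuousLinearMap.IsPositive (F - E)

namespace ContinuousNest

variable (𝒩 : ContinuousNest H)

/-- The nest algebra of `𝒩`. -/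
def alg : Set (H →L[ℂ] H) := {T | ∀ t ∈ Icc (0 : ℝ) 1, (1 - 𝒩.N t) * T * 𝒩.N t = 0}

/-- An interval of the nest: a difference `N t - N s` with `0 ≤ s ≤ t ≤ 1`. -/
def IsInterval (E : H →L[ℂ] H) : Prop :=
  ∃ s t : ℝ, 0 ≤ s ∧ s ≤ t ∧ t ≤ 1 ∧ E = 𝒩.N t - 𝒩.N s

def IsIntervalFamily (P : Set (H →L[ℂ] H)) : Prop := ∀ E ∈ P, 𝒩.IsInterval E

/-- A net of families of intervals: directed under refinement. -/
def IsNet (O : Set (Set (H →L[ℂ] H))) : Prop :=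
  (∀ P ∈ O, 𝒩.IsIntervalFamily P) ∧
  ∀ P ∈ O, ∀ Q ∈ O, ∃ R ∈ O, OpRefines R P ∧ OpRefines R Q

def nestSet : Set (H →L[ℂ] H) := 𝒩.N '' Icc (0 : ℝ) 1

/-- An order automorphism of the nest: an order-preserving bijection of `{N t : t ∈ [0,1]}`
onto itself. -/
def IsAuto (θ : (H →L[ℂ] H) → H →L[ℂ] H) : Prop :=
  Set.BijOn θ 𝒩.nestSet 𝒩.nestSet ∧
  ∀ s t : ℝ, s ∈ Icc (0 : ℝ) 1 → t ∈ Icc (0 : ℝ) 1 → s ≤ t →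
    ContinuousLinearMap.IsPositive (θ (𝒩.N t) - θ (𝒩.N s))

/-- The image family `θ(P) = {θ(N t) - θ(N s) : N t - N s ∈ P}`. -/
def autoImage (θ : (H →L[ℂ] H) → H →L[ℂ] H) (P : Set (H →L[ℂ] H)) : Set (H →L[ℂ] H) :=
  {E | ∃ s t : ℝ, 0 ≤ s ∧ s ≤ t ∧ t ≤ 1 ∧ 𝒩.N t - 𝒩.N s ∈ P ∧ E = θ (𝒩.N t) - θ (𝒩.N s)}

/-- A stable net of intervals. -/
def IsStableNet (O : Set (Set (H →L[ℂ] H))) : Prop :=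
  𝒩.IsNet O ∧ ∀ θ, 𝒩.IsAuto θ → ∀ P ∈ O, 𝒩.autoImage θ P ∈ O

/-- The kernel of a net `O`: those `X` in the nest algebra with
`lim_{P ∈ O} sup_{E ∈ P} ‖EXE‖ₑ = 0`; since the sup decreases under refinement, this limit
is `0` iff for every `ε > 0` some `P ∈ O` has all `‖EXE‖ₑ < ε`. -/
def kernel (O : Set (Set (H →L[ℂ] H))) : Set (H →L[ℂ] H) :=
  {X | X ∈ 𝒩.alg ∧ ∀ ε : ℝ, 0 < ε → ∃ P ∈ O, ∀ E ∈ P, essNorm (E * X * E) < ε}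

/-- A two-sided ideal of the nest algebra. -/
def IsIdeal (I : Set (H →L[ℂ] H)) : Prop :=
  I ⊆ 𝒩.alg ∧ (0 : H →L[ℂ] H) ∈ I ∧
  (∀ X ∈ I, ∀ Y ∈ I, X + Y ∈ I) ∧ (∀ X ∈ I, -X ∈ I) ∧
  ∀ A ∈ 𝒩.alg, ∀ X ∈ I, A * X ∈ I ∧ X * A ∈ I

/-- A stable ideal: a norm-closed two-sided ideal invariant under every automorphism
`T ↦ S T S⁻¹` of the nest algebra implemented by an invertible `S ∈ B(H)`. -/
def IsStableIdeal (I : Set (H →L[ℂ] H)) : Prop :=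
  𝒩.IsIdeal I ∧ IsClosed I ∧
  ∀ S : (H →L[ℂ] H)ˣ,
    (fun T => (↑S : H →L[ℂ] H) * T * (↑S⁻¹ : H →L[ℂ] H)) '' 𝒩.alg = 𝒩.alg →
    (fun T => (↑S : H →L[ℂ] H) * T * (↑S⁻¹ : H →L[ℂ] H)) '' I = I

end ContinuousNest

set_option linter.unusedSectionVars false
set_option linter.deprecated false
section EssNorm

theorem cpt_nonempty : ({K : H →L[ℂ] H | IsCompactOperator ⇑K}).Nonempty :=
  ⟨0, by simpa using (isCompactOperator_zero : IsCompactOperator (0 : H → H))⟩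

theorem essNorm_nonneg (T : H →L[ℂ] H) : 0 ≤ essNorm T := Metric.infDist_nonneg

theorem essNorm_le_sub {T K : H →L[ℂ] H} (hK : IsCompactOperator ⇑K) :
    essNorm T ≤ ‖T - K‖ := by
  rw [← dist_eq_norm]
  exact Metric.infDist_le_dist_of_mem hK

theorem essNorm_le_norm (T : H →L[ℂ] H) : essNorm T ≤ ‖T‖ := by
  have := essNorm_le_sub (T := T) (K := 0)
    (by simpa using (isCompactOperator_zero : IsCompactOperator (0 : H → H)))
  simpa using this

theorem exists_cpt_of_essNorm_lt {T : H →L[ℂ] H} {r : ℝ} (h : essNorm T < r) :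
    ∃ K : H →L[ℂ] H, IsCompactOperator ⇑K ∧ ‖T - K‖ < r := by
  obtain ⟨K, hK, h2⟩ := (Metric.infDist_lt_iff cpt_nonempty).1 h
  exact ⟨K, hK, by rwa [← dist_eq_norm]⟩

theorem cpt_mul_left (A : H →L[ℂ] H) {K : H →L[ℂ] H} (hK : IsCompactOperator ⇑K) :
    IsCompactOperator ⇑(A * K) := hK.clm_comp A

theorem cpt_mul_right (A : H →L[ℂ] H) {K : H →L[ℂ] H} (hK : IsCompactOperator ⇑K) :
    IsCompactOperator ⇑(K * A) := hK.comp_clm A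

theorem cpt_add {K L : H →L[ℂ] H} (hK : IsCompactOperator ⇑K) (hL : IsCompactOperator ⇑L) :
    IsCompactOperator ⇑(K + L) := hK.add hL

theorem cpt_sub {K L : H →L[ℂ] H} (hK : IsCompactOperator ⇑K) (hL : IsCompactOperator ⇑L) :
    IsCompactOperator ⇑(K - L) := hK.sub hL

theorem cpt_zero : IsCompactOperator ⇑(0 : H →L[ℂ] H) := by
  simpa using (isCompactOperator_zero : IsCompactOperator (0 : H → H))

theorem cpt_sum {ι : Type*} (s : Finset ι) (f : ι → H →L[ℂ] H)
    (hf : ∀ i ∈ s, IsCompactOperator ⇑(f i)) : IsCompactOperator ⇑(∑ i ∈ s, f i) := by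
  classical
  induction s using Finset.induction_on with
  | empty => simpa using cpt_zero
  | insert a s ha ih =>
    rw [Finset.sum_insert ha]
    exact cpt_add (hf _ (by simp)) (ih fun i hi => hf i (by simp [hi]))

theorem cpt_smul (c : ℂ) {K : H →L[ℂ] H} (hK : IsCompactOperator ⇑K) :
    IsCompactOperator ⇑(c • K) := hK.smul c

theorem cpt_of_tendsto {K : ℕ → H →L[ℂ] H} {L : H →L[ℂ] H} (h : Tendsto K atTop (𝓝 L))
    (hK : ∀ᶠ n in atTop, IsCompactOperator ⇑(K n)) : IsCompactOperator ⇑L :=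
  isCompactOperator_of_tendsto h hK

theorem essNorm_add_le (S T : H →L[ℂ] H) : essNorm (S + T) ≤ essNorm S + essNorm T := by
  apply le_of_forall_pos_le_add
  intro ε hε
  obtain ⟨K, hK, h1⟩ := exists_cpt_of_essNorm_lt (T := S) (r := essNorm S + ε / 2) (by linarith)
  obtain ⟨L, hL, h2⟩ := exists_cpt_of_essNorm_lt (T := T) (r := essNorm T + ε / 2) (by linarith)
  have := essNorm_le_sub (T := S + T) (cpt_add hK hL)
  have h3 : S + T - (K + L) = (S - K) + (T - L) := by abel
  rw [h3] at this
  linarith [norm_add_le (S - K) (T - L)]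

theorem essNorm_mul_mul_le (A T B : H →L[ℂ] H) (hA : ‖A‖ ≤ 1) (hB : ‖B‖ ≤ 1) :
    essNorm (A * T * B) ≤ essNorm T := by
  apply le_of_forall_pos_le_add
  intro ε hε
  obtain ⟨K, hK, h1⟩ := exists_cpt_of_essNorm_lt (T := T) (r := essNorm T + ε) (by linarith)
  have := essNorm_le_sub (T := A * T * B) (cpt_mul_right B (cpt_mul_left A hK))
  have h3 : A * T * B - A * K * B = A * (T - K) * B := by noncomm_ring
  rw [h3] at this
  have h4 : ‖A * (T - K) * B‖ ≤ ‖A‖ * ‖T - K‖ * ‖B‖ :=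
    (norm_mul_le _ _).trans (mul_le_mul_of_nonneg_right (norm_mul_le _ _) (norm_nonneg _))
  have h5 : ‖A‖ * ‖T - K‖ * ‖B‖ ≤ 1 * ‖T - K‖ * 1 := by gcongr
  linarith

theorem essNorm_of_cpt {T : H →L[ℂ] H} (hT : IsCompactOperator ⇑T) : essNorm T = 0 := by
  apply le_antisymm _ (essNorm_nonneg T)
  simpa using essNorm_le_sub (T := T) hT

end EssNorm

namespace ContinuousNest
variable (𝒩 : ContinuousNest H)

section basics
variable {𝒩} {s t : ℝ}

theorem N_mul_self (ht : t ∈ Icc (0:ℝ) 1) : 𝒩.N t * 𝒩.N t = 𝒩.N t := 𝒩.idem t ht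

theorem N_mul_ge (hs : s ∈ Icc (0:ℝ) 1) (ht : t ∈ Icc (0:ℝ) 1) (h : s ≤ t) :
    𝒩.N t * 𝒩.N s = 𝒩.N s := by
  rcases h.eq_or_lt with rfl | h
  · exact N_mul_self hs
  ext x
  have h1 : 𝒩.N s x ∈ LinearMap.range (𝒩.N t).toLinearMap :=
    (𝒩.range_lt s t hs ht h).le ⟨x, rfl⟩
  obtain ⟨y, hy⟩ := h1
  have hy' : 𝒩.N t y = 𝒩.N s x := hy
  change 𝒩.N t (𝒩.N s x) = 𝒩.N s x
  rw [← hy']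
  exact congrArg (fun f : H →L[ℂ] H => f y) (N_mul_self ht)

theorem N_mul_le (hs : s ∈ Icc (0:ℝ) 1) (ht : t ∈ Icc (0:ℝ) 1) (h : s ≤ t) :
    𝒩.N s * 𝒩.N t = 𝒩.N s := by
  have := congrArg star (N_mul_ge (𝒩 := 𝒩) hs ht h)
  rwa [star_mul, (𝒩.selfAdjoint s hs).star_eq, (𝒩.selfAdjoint t ht).star_eq] at this

theorem isStarProj (ht : t ∈ Icc (0:ℝ) 1) : IsStarProjection (𝒩.N t) :=
  ⟨𝒩.idem t ht, 𝒩.selfAdjoint t ht⟩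

theorem norm_proj_le {P : H →L[ℂ] H} (h : IsStarProjection P) : ‖P‖ ≤ 1 := h.norm_le

theorem isStarProj_compl (ht : t ∈ Icc (0:ℝ) 1) : IsStarProjection (1 - 𝒩.N t) :=
  (isStarProj ht).one_sub

theorem isStarProj_sub (hs : s ∈ Icc (0:ℝ) 1) (ht : t ∈ Icc (0:ℝ) 1) (h : s ≤ t) :
    IsStarProjection (𝒩.N t - 𝒩.N s) := by
  refine ⟨?_, ?_⟩
  · unfold IsIdempotentElem
    have e1 := N_mul_ge (𝒩 := 𝒩) hs ht h
    have e2 := N_mul_le (𝒩 := 𝒩) hs ht h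
    have e3 := N_mul_self (𝒩 := 𝒩) hs
    have e4 := N_mul_self (𝒩 := 𝒩) ht
    rw [sub_mul, mul_sub, mul_sub, e1, e2, e3, e4]; abel
  · exact (𝒩.selfAdjoint t ht).sub (𝒩.selfAdjoint s hs)

end basics

section algebra
variable {𝒩} {s t : ℝ} {S T : H →L[ℂ] H}

theorem mem_alg_iff : T ∈ 𝒩.alg ↔ ∀ t ∈ Icc (0:ℝ) 1, T * 𝒩.N t = 𝒩.N t * T * 𝒩.N t := by
  unfold alg
  simp only [mem_setOf_eq]
  refine forall₂_congr fun t ht => ?_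
  rw [sub_mul, one_mul, sub_mul, sub_eq_zero]

theorem alg_zero : (0 : H →L[ℂ] H) ∈ 𝒩.alg := by
  rw [mem_alg_iff]; intro t ht; simp

theorem alg_one : (1 : H →L[ℂ] H) ∈ 𝒩.alg := by
  rw [mem_alg_iff]; intro t ht; simp [N_mul_self ht]

theorem alg_add (hS : S ∈ 𝒩.alg) (hT : T ∈ 𝒩.alg) : S + T ∈ 𝒩.alg := by
  rw [mem_alg_iff] at *; intro t ht
  rw [mul_add, add_mul, add_mul, ← hS t ht, ← hT t ht]

theorem alg_smul (c : ℂ) (hT : T ∈ 𝒩.alg) : c • T ∈ 𝒩.alg := by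
  rw [mem_alg_iff] at *; intro t ht
  rw [mul_smul_comm, smul_mul_assoc, smul_mul_assoc, ← hT t ht]

theorem alg_neg (hT : T ∈ 𝒩.alg) : -T ∈ 𝒩.alg := by
  rw [mem_alg_iff] at *; intro t ht
  rw [mul_neg, neg_mul, neg_mul, ← hT t ht]

theorem alg_sub (hS : S ∈ 𝒩.alg) (hT : T ∈ 𝒩.alg) : S - T ∈ 𝒩.alg := by
  rw [sub_eq_add_neg]; exact alg_add hS (alg_neg hT)

theorem alg_mul (hS : S ∈ 𝒩.alg) (hT : T ∈ 𝒩.alg) : S * T ∈ 𝒩.alg := by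
  rw [mem_alg_iff] at *; intro t ht
  have h1 := hS t ht
  have h2 := hT t ht
  calc S * T * 𝒩.N t = S * (T * 𝒩.N t) := by rw [mul_assoc]
    _ = (S * 𝒩.N t) * (T * 𝒩.N t) := by
        rw [mul_assoc S (𝒩.N t), ← mul_assoc (𝒩.N t) T, ← h2]
    _ = 𝒩.N t * S * (𝒩.N t * T * 𝒩.N t) := by rw [h1, mul_assoc _ (𝒩.N t), ← mul_assoc _ T]
    _ = 𝒩.N t * (S * T) * 𝒩.N t := by rw [← h2]; simp only [mul_assoc]

theorem alg_sum {ι : Type*} (s : Finset ι) (f : ι → H →L[ℂ] H)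
    (hf : ∀ i ∈ s, f i ∈ 𝒩.alg) : (∑ i ∈ s, f i) ∈ 𝒩.alg := by
  classical
  induction s using Finset.induction_on with
  | empty => simpa using alg_zero
  | insert a s ha ih =>
    rw [Finset.sum_insert ha]
    exact alg_add (hf _ (by simp)) (ih fun i hi => hf i (by simp [hi]))

theorem alg_N (ht : t ∈ Icc (0:ℝ) 1) : 𝒩.N t ∈ 𝒩.alg := by
  rw [mem_alg_iff]; intro s hs
  rcases le_total s t with h | h
  · rw [N_mul_ge hs ht h, mul_assoc, N_mul_ge hs ht h, N_mul_self hs]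
  · rw [N_mul_le ht hs h, N_mul_ge ht hs h, N_mul_le ht hs h]

theorem alg_corner (Z : H →L[ℂ] H) (hs : s ∈ Icc (0:ℝ) 1) (ht : t ∈ Icc (0:ℝ) 1) (h : s ≤ t) :
    𝒩.N s * Z * (1 - 𝒩.N t) ∈ 𝒩.alg := by
  rw [mem_alg_iff]; intro u hu
  rcases le_total u t with h' | h'
  · have : (1 - 𝒩.N t) * 𝒩.N u = 0 := by rw [sub_mul, N_mul_ge hu ht h', one_mul, sub_self]
    rw [mul_assoc _ _ (𝒩.N u), this, mul_zero, mul_assoc, mul_assoc _ _ (𝒩.N u), this, mul_zero,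
      mul_zero]
  · rw [← mul_assoc, ← mul_assoc, N_mul_ge hs hu (h.trans h')]

theorem alg_of_strong {Z : ℕ → H →L[ℂ] H} {T : H →L[ℂ] H} (hZ : ∀ n, Z n ∈ 𝒩.alg)
    (h : ∀ x, Tendsto (fun n => Z n x) atTop (𝓝 (T x))) : T ∈ 𝒩.alg := by
  intro t ht
  ext x
  have h1 : Tendsto (fun n => (1 - 𝒩.N t) (Z n (𝒩.N t x))) atTop
      (𝓝 ((1 - 𝒩.N t) (T (𝒩.N t x)))) :=
    ((1 - 𝒩.N t).continuous.tendsto _).comp (h _)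
  have h2 : ∀ n, (1 - 𝒩.N t) (Z n (𝒩.N t x)) = 0 := fun n => by
    have := hZ n t ht
    exact congrArg (fun f : H →L[ℂ] H => f x) this
  simp only [h2] at h1
  exact (tendsto_nhds_unique h1 tendsto_const_nhds)

end algebra

/-- The corner `(1 - N s) Y (N t)`, equal to the compression for `Y` in the algebra. -/
def cor (Y : H →L[ℂ] H) (s t : ℝ) : H →L[ℂ] H := (1 - 𝒩.N s) * Y * 𝒩.N t

section corner
variable {𝒩} {s t s' t' : ℝ} {Y Z : H →L[ℂ] H}

theorem compress_eq_cor (hY : Y ∈ 𝒩.alg) (hs : s ∈ Icc (0:ℝ) 1) (ht : t ∈ Icc (0:ℝ) 1)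
    (h : s ≤ t) : (𝒩.N t - 𝒩.N s) * Y * (𝒩.N t - 𝒩.N s) = 𝒩.cor Y s t := by
  have hY := mem_alg_iff.1 hY
  have e1 := hY t ht
  have e2 := hY s hs
  have e3 : 𝒩.N t * Y * 𝒩.N s = Y * 𝒩.N s := by
    rw [mul_assoc, e2, ← mul_assoc, ← mul_assoc, N_mul_ge hs ht h]
  unfold cor
  rw [sub_mul, sub_mul, mul_sub, mul_sub, e3, ← e1, ← e2, sub_mul, sub_mul, one_mul]
  abel

theorem cor_mono (hs : s ∈ Icc (0:ℝ) 1) (ht : t ∈ Icc (0:ℝ) 1) (hs' : s' ∈ Icc (0:ℝ) 1)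
    (ht' : t' ∈ Icc (0:ℝ) 1) (h1 : s' ≤ s) (h2 : t ≤ t') :
    𝒩.cor Y s t = (1 - 𝒩.N s) * 𝒩.cor Y s' t' * 𝒩.N t := by
  have e1 : (1 - 𝒩.N s) * (1 - 𝒩.N s') = 1 - 𝒩.N s := by
    rw [sub_mul, mul_sub, mul_sub, N_mul_ge hs' hs h1]; simp
  unfold cor
  calc (1 - 𝒩.N s) * Y * 𝒩.N t = (1 - 𝒩.N s) * (1 - 𝒩.N s') * Y * (𝒩.N t' * 𝒩.N t) := by
        rw [e1, N_mul_ge ht ht' h2]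
    _ = _ := by simp only [mul_assoc]

theorem cor_add : 𝒩.cor (Y + Z) s t = 𝒩.cor Y s t + 𝒩.cor Z s t := by
  simp only [cor, mul_add, add_mul]
theorem cor_sub : 𝒩.cor (Y - Z) s t = 𝒩.cor Y s t - 𝒩.cor Z s t := by
  simp only [cor, mul_sub, sub_mul]

theorem cor_mul (hZ : Z ∈ 𝒩.alg) (ht : t ∈ Icc (0:ℝ) 1) :
    𝒩.cor (Y * Z) s t = 𝒩.cor Y s t * Z * 𝒩.N t := by
  have := mem_alg_iff.1 hZ t ht
  unfold cor
  rw [mul_assoc _ (𝒩.N t) Z, mul_assoc _ (𝒩.N t * Z), ← this]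
  simp only [mul_assoc]

theorem norm_cor_le (hs : s ∈ Icc (0:ℝ) 1) (ht : t ∈ Icc (0:ℝ) 1) : ‖𝒩.cor Y s t‖ ≤ ‖Y‖ := by
  have h1 := norm_proj_le (isStarProj_compl (𝒩 := 𝒩) hs)
  have h2 := norm_proj_le (isStarProj (𝒩 := 𝒩) ht)
  unfold cor
  calc _ ≤ ‖1 - 𝒩.N s‖ * ‖Y‖ * ‖𝒩.N t‖ :=
        (norm_mul_le _ _).trans (mul_le_mul_of_nonneg_right (norm_mul_le _ _) (norm_nonneg _))
    _ ≤ 1 * ‖Y‖ * 1 := by gcongr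
    _ = _ := by ring

/-- comparison of intervals -/
theorem interval_le (hs : s ∈ Icc (0:ℝ) 1) (ht : t ∈ Icc (0:ℝ) 1) (hs' : s' ∈ Icc (0:ℝ) 1)
    (ht' : t' ∈ Icc (0:ℝ) 1) (hst : s < t) (hst' : s' ≤ t')
    (h : ContinuousLinearMap.IsPositive ((𝒩.N t' - 𝒩.N s') - (𝒩.N t - 𝒩.N s))) :
    s' ≤ s ∧ t ≤ t' := by
  have key : ∀ x, (𝒩.N t' - 𝒩.N s') x = 0 → (𝒩.N t - 𝒩.N s) x = 0 := by
    intro x hx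
    have h1 := h.2 x
    rw [ContinuousLinearMap.reApplyInnerSelf_apply, ContinuousLinearMap.sub_apply, hx, zero_sub,
      inner_neg_left, map_neg] at h1
    have h2 := isStarProj_sub (𝒩 := 𝒩) hs ht hst.le
    have h3 : inner ℂ ((𝒩.N t - 𝒩.N s) x) x
        = inner ℂ ((𝒩.N t - 𝒩.N s) x) ((𝒩.N t - 𝒩.N s) x) := by
      conv_lhs => rw [← h2.1]
      rw [ContinuousLinearMap.mul_apply]
      conv_lhs => rw [← h2.2.star_eq]
      rw [ContinuousLinearMap.star_eq_adjoint, ContinuousLinearMap.adjoint_inner_left]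
      rw [← ContinuousLinearMap.star_eq_adjoint, h2.2.star_eq]
    rw [h3, inner_self_eq_norm_sq] at h1
    have : ‖(𝒩.N t - 𝒩.N s) x‖ ^ 2 ≤ 0 := by linarith
    have : ‖(𝒩.N t - 𝒩.N s) x‖ = 0 := by
      nlinarith [norm_nonneg ((𝒩.N t - 𝒩.N s) x)]
    exact norm_eq_zero.1 this
  -- a nonzero vector in any nontrivial interval
  have nz : ∀ a b : ℝ, a ∈ Icc (0:ℝ) 1 → b ∈ Icc (0:ℝ) 1 → a < b →
      ∃ x, 𝒩.N b x = x ∧ 𝒩.N a x = 0 ∧ x ≠ 0 := by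
    intro a b ha hb hab
    obtain ⟨_, ⟨z, rfl⟩, hz⟩ := SetLike.exists_of_lt (𝒩.range_lt a b ha hb hab)
    change 𝒩.N b z ∉ _ at hz
    refine ⟨(𝒩.N b - 𝒩.N a) z, ?_, ?_, ?_⟩
    · rw [← ContinuousLinearMap.mul_apply, mul_sub, N_mul_self hb, N_mul_ge ha hb hab.le]
    · rw [← ContinuousLinearMap.mul_apply, mul_sub, N_mul_self ha, N_mul_le ha hb hab.le]; simp
    · intro h0
      apply hz
      rw [ContinuousLinearMap.sub_apply, sub_eq_zero] at h0
      exact ⟨z, h0.symm⟩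
  have app : ∀ a b : ℝ, a ∈ Icc (0:ℝ) 1 → b ∈ Icc (0:ℝ) 1 → a ≤ b → ∀ x, 𝒩.N a x = x →
      𝒩.N b x = x := by
    intro a b ha hb hab x hx
    have := congrArg (fun f : H →L[ℂ] H => f x) (N_mul_ge (𝒩 := 𝒩) ha hb hab)
    simpa [hx] using this
  have app0 : ∀ a b : ℝ, a ∈ Icc (0:ℝ) 1 → b ∈ Icc (0:ℝ) 1 → a ≤ b → ∀ x, 𝒩.N b x = 0 →
      𝒩.N a x = 0 := by
    intro a b ha hb hab x hx
    have := congrArg (fun f : H →L[ℂ] H => f x) (N_mul_le (𝒩 := 𝒩) ha hb hab)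
    simpa [hx] using this.symm
  constructor
  · by_contra! hc
    -- s < s' : use a vector in N(min s' t) - N s
    have hm : min s' t ∈ Icc (0:ℝ) 1 := ⟨le_min hs'.1 ht.1, (min_le_left _ _).trans hs'.2⟩
    obtain ⟨x, h1, h2, h3⟩ := nz s (min s' t) hs hm (lt_min hc hst)
    have a1 := app _ _ hm hs' (min_le_left _ _) x h1
    have a2 := app _ _ hm ht (min_le_right _ _) x h1
    have a3 := app _ _ hs' ht' hst' x a1
    have := key x (by simp [a1, a3])
    simp [a2, h2] at this
    exact h3 this
  · by_contra! hc
    have hm : max s t' ∈ Icc (0:ℝ) 1 := ⟨hs.1.trans (le_max_left _ _), max_le hs.2 ht'.2⟩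
    obtain ⟨x, h1, h2, h3⟩ := nz (max s t') t hm ht (max_lt hst hc)
    have a1 := app0 _ _ hs hm (le_max_left _ _) x h2
    have a2 := app0 _ _ ht' hm (le_max_right _ _) x h2
    have a3 := app0 _ _ hs' ht' hst' x a2
    have := key x (by simp [a2, a3])
    simp [h1, a1] at this
    exact h3 this

end corner
end ContinuousNest

/-- Abstract Parrott completion. -/
theorem parrott (A B C : H →L[ℂ] H) {c : ℝ} (hc : ‖A‖ < c)
    (h1 : ∀ y, ‖A y‖ ^ 2 + ‖C y‖ ^ 2 ≤ c ^ 2 * ‖y‖ ^ 2)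
    (h2 : ∀ β, ‖A.adjoint β‖ ^ 2 + ‖B.adjoint β‖ ^ 2 ≤ c ^ 2 * ‖β‖ ^ 2) :
    ∃ K : H →L[ℂ] H, (A = 0 → K = 0) ∧
      ∀ a b, ‖A a + B b‖ ^ 2 + ‖C a + (C * K * B) b‖ ^ 2 ≤ c ^ 2 * (‖a‖ ^ 2 + ‖b‖ ^ 2) := by
  have hc0 : 0 < c := (norm_nonneg _).trans_lt hc
  set Δ : H →L[ℂ] H := ((c ^ 2 : ℝ) : ℂ) • (1 : H →L[ℂ] H) - A * A.adjoint with hΔ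
  have hΔap : ∀ x, Δ x = ((c ^ 2 : ℝ) : ℂ) • x - A (A.adjoint x) := fun x => rfl
  have hin : ∀ x, (inner ℂ (Δ x) x : ℂ).re = c ^ 2 * ‖x‖ ^ 2 - ‖A.adjoint x‖ ^ 2 := by
    intro x
    rw [hΔap, inner_sub_left, ← ContinuousLinearMap.adjoint_inner_right, inner_smul_left,
      Complex.sub_re]
    have e1 : (inner ℂ (A.adjoint x) (A.adjoint x) : ℂ).re = ‖A.adjoint x‖ ^ 2 :=
      inner_self_eq_norm_sq (𝕜 := ℂ) _
    have e2 : (inner ℂ x x : ℂ).re = ‖x‖ ^ 2 := inner_self_eq_norm_sq (𝕜 := ℂ) _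
    rw [e1, Complex.conj_ofReal, Complex.re_ofReal_mul, e2]
  have hu : IsUnit Δ := by
    have hpos : 0 < c ^ 2 - ‖A‖ ^ 2 := by nlinarith [norm_nonneg A]
    refine ContinuousLinearMap.isUnit_of_forall_le_norm_inner_map Δ
      (c := ⟨c ^ 2 - ‖A‖ ^ 2, hpos.le⟩) (by exact_mod_cast hpos) ?_
    intro x
    have h3 : (inner ℂ (Δ x) x : ℂ).re ≤ ‖(inner ℂ (Δ x) x : ℂ)‖ := Complex.re_le_norm _
    have h4 : ‖A.adjoint x‖ ≤ ‖A‖ * ‖x‖ := by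
      have := A.adjoint.le_opNorm x
      rwa [LinearIsometryEquiv.norm_map] at this
    have h5 : ‖A.adjoint x‖ ^ 2 ≤ (‖A‖ * ‖x‖) ^ 2 := by gcongr
    rw [hin] at h3
    refine le_trans ?_ h3
    change ‖x‖ ^ 2 * (c ^ 2 - ‖A‖ ^ 2) ≤ _
    nlinarith
  obtain ⟨U, hU⟩ := hu
  set V : H →L[ℂ] H := ↑U⁻¹ with hV
  have hΔV : Δ * V = 1 := by rw [← hU]; exact U.mul_inv
  refine ⟨-(A.adjoint * V), fun h => by simp [h], ?_⟩
  intro a b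
  set β := V (B b) with hβ
  have hΔβ : Δ β = B b := congrArg (fun f : H →L[ℂ] H => f (B b)) hΔV
  set y := a - A.adjoint β with hy
  have hCy : C a + (C * -(A.adjoint * V) * B) b = C y := by
    simp [hy, hβ, sub_eq_add_neg]
  have hAy : A y = (A a + B b) - ((c ^ 2 : ℝ) : ℂ) • β := by
    have := hΔap β
    rw [hΔβ] at this
    rw [hy, map_sub, this]
    abel
  have k1 := h1 y
  have k2 := h2 β
  set p := A a + B b with hp
  set s := (inner ℂ (B b) β : ℂ).re with hs
  have hs1 : s = c ^ 2 * ‖β‖ ^ 2 - ‖A.adjoint β‖ ^ 2 := by rw [← hin, hΔβ]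
  have hAa : (inner ℂ a (A.adjoint β) : ℂ).re = (inner ℂ (A a) β : ℂ).re := by
    rw [ContinuousLinearMap.adjoint_inner_right]
  have e1 : ‖y‖ ^ 2 = ‖a‖ ^ 2 - 2 * (inner ℂ (A a) β : ℂ).re + ‖A.adjoint β‖ ^ 2 := by
    rw [hy, norm_sub_sq (𝕜 := ℂ), ← hAa]; rfl
  have e2 : ‖A y‖ ^ 2 = ‖p‖ ^ 2 - 2 * (c ^ 2 * ((inner ℂ (A a) β : ℂ).re + s))
      + c ^ 4 * ‖β‖ ^ 2 := by
    rw [hAy, norm_sub_sq (𝕜 := ℂ), inner_smul_right, norm_smul]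
    have : RCLike.re (((c ^ 2 : ℝ) : ℂ) * inner ℂ p β) = c ^ 2 * ((inner ℂ (A a) β : ℂ).re + s) := by
      change (((c ^ 2 : ℝ) : ℂ) * inner ℂ p β).re = _
      rw [Complex.re_ofReal_mul, hp, inner_add_left, Complex.add_re]
    rw [this, Complex.norm_real, Real.norm_of_nonneg (by positivity)]
    ring
  have hs2 : s ≤ ‖b‖ * ‖B.adjoint β‖ := by
    rw [hs, ← ContinuousLinearMap.adjoint_inner_right]
    exact (Complex.re_le_norm _).trans (norm_inner_le_norm _ _)
  have hs3 : s ≤ ‖b‖ ^ 2 := by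
    have q : ‖B.adjoint β‖ ^ 2 ≤ s := by linarith
    by_contra! hcon
    nlinarith [norm_nonneg b, norm_nonneg (B.adjoint β), sq_nonneg (‖b‖ - ‖B.adjoint β‖)]
  rw [hCy]
  have hc2 : 0 < c ^ 2 := by positivity
  have : ‖p‖ ^ 2 + ‖C y‖ ^ 2 ≤ c ^ 2 * (‖a‖ ^ 2 + s) := by
    rw [e2, e1] at k1
    nlinarith
  nlinarith

theorem proj_norm_sq_add {P Q : H →L[ℂ] H} (hP : IsStarProjection P) (h0 : P * Q = 0) (x y : H) :
    ‖P x + Q y‖ ^ 2 = ‖P x‖ ^ 2 + ‖Q y‖ ^ 2 := by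
  have h : inner ℂ (P x) (Q y) = 0 := by
    have : P.adjoint = P := hP.2
    rw [← this, ContinuousLinearMap.adjoint_inner_left]
    have h1 : P (Q y) = 0 := congrArg (fun f : H →L[ℂ] H => f y) h0
    rw [h1, inner_zero_right]
  rw [norm_add_sq (𝕜 := ℂ), h]
  simp

namespace ContinuousNest
variable {𝒩 : ContinuousNest H}

theorem merge {Y : H →L[ℂ] H} (hY : Y ∈ 𝒩.alg) {s₁ t₁ s₂ t₂ ρ : ℝ}
    (hs₁ : s₁ ∈ Icc (0:ℝ) 1) (ht₁ : t₁ ∈ Icc (0:ℝ) 1)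
    (hs₂ : s₂ ∈ Icc (0:ℝ) 1) (ht₂ : t₂ ∈ Icc (0:ℝ) 1) (hs : s₁ ≤ s₂) (ht : t₁ ≤ t₂)
    (h1 : ‖𝒩.cor Y s₁ t₁‖ < ρ) (h2 : ‖𝒩.cor Y s₂ t₂‖ < ρ) :
    ∃ Y' ∈ 𝒩.alg, ‖𝒩.cor Y' s₁ t₂‖ < ρ ∧ 𝒩.cor Y' s₁ t₁ = 𝒩.cor Y s₁ t₁ ∧
      ∀ s t, s ∈ Icc (0:ℝ) 1 → s₂ ≤ s → 𝒩.cor Y' s t = 𝒩.cor Y s t := by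
  obtain ⟨c, hc1, hc2⟩ := exists_between (max_lt h1 h2)
  have hc1' := (le_max_left _ _).trans hc1.le
  have hc2' := (le_max_right _ _).trans hc1.le
  have hc0 : 0 < c := (norm_nonneg _).trans_lt ((le_max_left _ _).trans_lt hc1)
  set p := 1 - 𝒩.N s₂ with hp
  set e := 𝒩.N s₂ - 𝒩.N s₁ with he
  set q := 𝒩.N t₁ with hq
  set q' := 𝒩.N t₂ - 𝒩.N t₁ with hq'
  have pp : IsStarProjection p := isStarProj_compl hs₂
  have pe : IsStarProjection e := isStarProj_sub hs₁ hs₂ hs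
  have pq : IsStarProjection q := isStarProj ht₁
  have pq' : IsStarProjection q' := isStarProj_sub ht₁ ht₂ ht
  have m1 := N_mul_ge (𝒩 := 𝒩) hs₁ hs₂ hs
  have m2 := N_mul_le (𝒩 := 𝒩) hs₁ hs₂ hs
  have m3 := N_mul_ge (𝒩 := 𝒩) ht₁ ht₂ ht
  have m4 := N_mul_le (𝒩 := 𝒩) ht₁ ht₂ ht
  have m5 := N_mul_self (𝒩 := 𝒩) ht₁
  have m6 := N_mul_self (𝒩 := 𝒩) hs₂
  have m7 := N_mul_self (𝒩 := 𝒩) hs₁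
  have m8 := N_mul_self (𝒩 := 𝒩) ht₂
  have hpe : p * e = 0 := by rw [hp, he, sub_mul, mul_sub, mul_sub, m1, m6]; simp
  have hqq' : q * q' = 0 := by rw [hq, hq', mul_sub, m4, m5]; simp
  have hq'q : q' * q = 0 := by rw [hq, hq', sub_mul, m3, m5]; simp
  set A := p * Y * q with hA
  set B := p * Y * q' with hB
  set C := e * Y * q with hC
  have eAC : A + C = 𝒩.cor Y s₁ t₁ := by
    rw [hA, hC, cor, ← add_mul, ← add_mul, hp, he, hq]; simp
  have eAB : A + B = 𝒩.cor Y s₂ t₂ := by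
    rw [hA, hB, cor, ← mul_add, hq, hq']; simp [hp]
  have k1 : ∀ y, ‖A y‖ ^ 2 + ‖C y‖ ^ 2 ≤ c ^ 2 * ‖y‖ ^ 2 := by
    intro y
    have := proj_norm_sq_add pp hpe (Y (q y)) (Y (q y))
    have h3 : A y = p (Y (q y)) := rfl
    have h4 : C y = e (Y (q y)) := rfl
    rw [h3, h4, ← this, ← h3, ← h4]
    have h5 : A y + C y = (𝒩.cor Y s₁ t₁) y := by rw [← eAC]; rfl
    rw [h5, ← mul_pow]
    have := ContinuousLinearMap.le_of_opNorm_le _ hc1' y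
    gcongr
  have k2 : ∀ y, ‖A.adjoint y‖ ^ 2 + ‖B.adjoint y‖ ^ 2 ≤ c ^ 2 * ‖y‖ ^ 2 := by
    intro y
    have := proj_norm_sq_add pq hqq' (Y.adjoint (p y)) (Y.adjoint (p y))
    have h3 : A.adjoint y = q (Y.adjoint (p y)) := by
      have : star A = q * (star Y * p) := by
        rw [hA, star_mul, star_mul, pp.2.star_eq, pq.2.star_eq]
      exact congrArg (fun f : H →L[ℂ] H => f y) this
    have h4 : B.adjoint y = q' (Y.adjoint (p y)) := by
      have : star B = q' * (star Y * p) := by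
        rw [hB, star_mul, star_mul, pp.2.star_eq, pq'.2.star_eq]
      exact congrArg (fun f : H →L[ℂ] H => f y) this
    rw [h3, h4, ← this, ← h3, ← h4]
    have h5 : A.adjoint y + B.adjoint y = (𝒩.cor Y s₂ t₂).adjoint y := by
      rw [← eAB, map_add]; rfl
    rw [h5, ← mul_pow]
    have := ContinuousLinearMap.le_of_opNorm_le (𝒩.cor Y s₂ t₂).adjoint (c := c)
      (by rw [LinearIsometryEquiv.norm_map]; exact hc2') y
    gcongr
  have hAn : ‖A‖ < c := by
    refine lt_of_le_of_lt ?_ ((le_max_left _ _).trans_lt hc1)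
    have : A = p * (𝒩.cor Y s₁ t₁) := by
      rw [← eAC, mul_add, hA, hC]
      simp only [← mul_assoc]
      rw [pp.1, hpe]; simp
    calc ‖A‖ ≤ ‖p‖ * ‖𝒩.cor Y s₁ t₁‖ := by
          conv_lhs => rw [this]
          exact norm_mul_le _ _
      _ ≤ 1 * ‖𝒩.cor Y s₁ t₁‖ := by gcongr; exact norm_proj_le pp
      _ = _ := one_mul _
  obtain ⟨K, hK0, hK⟩ := parrott A B C hAn k1 k2
  set D := C * K * B with hD
  have hDed : D = e * D * q' := by
    have e1 : e * C = C := by rw [hC]; simp only [← mul_assoc]; rw [pe.1]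
    have e2 : B * q' = B := by rw [hB, mul_assoc, pq'.1]
    calc D = (e * C) * K * (B * q') := by rw [e1, e2]
      _ = _ := by rw [hD]; simp only [mul_assoc]
  have eA : e ∈ 𝒩.alg := alg_sub (alg_N hs₂) (alg_N hs₁)
  have q'A : q' ∈ 𝒩.alg := alg_sub (alg_N ht₂) (alg_N ht₁)
  have hDA : D ∈ 𝒩.alg := by
    rcases le_total s₂ t₁ with h | h
    · have e1 : 𝒩.N s₂ * e = e := by rw [he, mul_sub, m1, m6]
      have e2 : q' * (1 - 𝒩.N t₁) = q' := by rw [mul_sub, ← hq, hq'q]; simp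
      have : D = 𝒩.N s₂ * D * (1 - 𝒩.N t₁) := by
        rw [hDed]
        conv_lhs => rw [← e1, ← e2]
        simp only [mul_assoc]
      rw [this]
      exact alg_corner _ hs₂ ht₁ h
    · have hA0 : A = 0 := by
        have e1 := mem_alg_iff.1 hY t₁ ht₁
        rw [hA, mul_assoc, e1, ← mul_assoc, ← mul_assoc]
        have : p * 𝒩.N t₁ = 0 := by rw [hp, sub_mul, N_mul_ge ht₁ hs₂ h]; simp
        rw [this]; simp
      rw [hD, hK0 hA0]
      simpa using alg_zero
  have hYA : Y - e * Y * q' + D ∈ 𝒩.alg :=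
    alg_add (alg_sub hY (alg_mul (alg_mul eA hY) q'A)) hDA
  refine ⟨Y - e * Y * q' + D, hYA, ?_, ?_, ?_⟩
  · refine lt_of_le_of_lt ?_ hc2
    refine ContinuousLinearMap.opNorm_le_bound _ hc0.le ?_
    intro x
    have f1 : (1 - 𝒩.N s₁) * e = e := by rw [he, sub_mul, mul_sub, mul_sub, m7, m2]; simp
    have f2 : q' * 𝒩.N t₂ = q' := by rw [hq', sub_mul, m8, m4]
    have f3 : 𝒩.cor (Y - e * Y * q' + D) s₁ t₂ = A + B + (C + D) := by
      rw [cor_add, cor_sub]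
      have g1 : 𝒩.cor (e * Y * q') s₁ t₂ = e * Y * q' := by
        unfold cor
        rw [← mul_assoc, ← mul_assoc, f1, mul_assoc, f2]
      have g2 : 𝒩.cor D s₁ t₂ = D := by
        rw [hDed]; unfold cor
        rw [← mul_assoc, ← mul_assoc, f1, mul_assoc, f2]
      have g3 : 𝒩.cor Y s₁ t₂ = A + B + C + e * Y * q' := by
        rw [hA, hB, hC, cor]
        have : 1 - 𝒩.N s₁ = p + e := by rw [hp, he]; abel
        have h' : 𝒩.N t₂ = q + q' := by rw [hq, hq']; abel
        rw [this, h', add_mul, add_mul, mul_add, mul_add]; abel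
      rw [g1, g2, g3]; abel
    rw [f3]
    have f4 := hK (q x) (q' x)
    have pid : ∀ {P : H →L[ℂ] H}, IsStarProjection P → ∀ z, P (P z) = P z := fun hP z =>
      congrArg (fun f : H →L[ℂ] H => f z) hP.1
    have f5 : (A + B + (C + D)) x = (A (q x) + B (q' x)) + (C (q x) + D (q' x)) := by
      have : D (q' x) = D x := by
        rw [hDed]; change e (D (q' (q' x))) = e (D (q' x)); rw [pid pq']
      rw [this]
      simp [hA, hB, hC, pid pq, pid pq']
    have f6 : ‖(A + B + (C + D)) x‖ ^ 2 = ‖A (q x) + B (q' x)‖ ^ 2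
        + ‖C (q x) + D (q' x)‖ ^ 2 := by
      rw [f5]
      have g1 : A (q x) + B (q' x) = p (Y (q (q x)) + Y (q' (q' x))) := by
        rw [map_add]; rfl
      have g2 : C (q x) + D (q' x) = e (Y (q (q x)) + D (q' (q' x))) := by
        rw [map_add]
        conv_lhs => rw [hDed]
        rfl
      rw [g1, g2, proj_norm_sq_add pp hpe]
    have f7 : ‖q x‖ ^ 2 + ‖q' x‖ ^ 2 ≤ ‖x‖ ^ 2 := by
      rw [← proj_norm_sq_add pq hqq']
      have : q x + q' x = 𝒩.N t₂ x := by rw [hq, hq']; simp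
      rw [this]
      have := ContinuousLinearMap.le_of_opNorm_le _ (norm_proj_le (isStarProj (𝒩 := 𝒩) ht₂)) x
      rw [one_mul] at this
      gcongr
    have f8 : ‖(A + B + (C + D)) x‖ ^ 2 ≤ (c * ‖x‖) ^ 2 := by
      rw [f6]; refine f4.trans ?_
      rw [mul_pow]; gcongr
    exact le_of_sq_le_sq f8 (by positivity)
  · rw [cor_add, cor_sub]
    have g1 : 𝒩.cor (e * Y * q') s₁ t₁ = 0 := by
      unfold cor; rw [mul_assoc _ _ (𝒩.N t₁), mul_assoc _ q', ← hq, hq'q]; simp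
    have g2 : 𝒩.cor D s₁ t₁ = 0 := by
      rw [hDed]
      unfold cor; rw [mul_assoc _ _ (𝒩.N t₁), mul_assoc _ q', ← hq, hq'q]; simp
    rw [g1, g2]; simp
  · intro s t hs' hss
    have f : (1 - 𝒩.N s) * e = 0 := by
      rw [he, sub_mul, mul_sub, mul_sub, N_mul_ge hs₂ hs' hss, N_mul_ge hs₁ hs' (hs.trans hss)]
      simp
    rw [cor_add, cor_sub]
    have g1 : 𝒩.cor (e * Y * q') s t = 0 := by
      unfold cor; simp only [← mul_assoc]; rw [f]; simp
    have g2 : 𝒩.cor D s t = 0 := by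
      rw [hDed]
      unfold cor; simp only [← mul_assoc]; rw [f]; simp
    rw [g1, g2]; simp

end ContinuousNest

namespace ContinuousNest
variable {𝒩 : ContinuousNest H}

theorem alg_cor {Y : H →L[ℂ] H} (hY : Y ∈ 𝒩.alg) {s t : ℝ} (hs : s ∈ Icc (0:ℝ) 1)
    (ht : t ∈ Icc (0:ℝ) 1) : 𝒩.cor Y s t ∈ 𝒩.alg :=
  alg_mul (alg_mul (alg_sub alg_one (alg_N hs)) hY) (alg_N ht)

theorem cor_congr {Y Z : H →L[ℂ] H} {s t s' t' : ℝ}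
    (hs : s ∈ Icc (0:ℝ) 1) (ht : t ∈ Icc (0:ℝ) 1) (hs' : s' ∈ Icc (0:ℝ) 1)
    (ht' : t' ∈ Icc (0:ℝ) 1) (h1 : s' ≤ s) (h2 : t ≤ t') (h : 𝒩.cor Y s' t' = 𝒩.cor Z s' t') :
    𝒩.cor Y s t = 𝒩.cor Z s t := by
  rw [cor_mono hs ht hs' ht' h1 h2, cor_mono hs ht hs' ht' h1 h2, h]

theorem finite_sorted {ρ : ℝ} (l : List (ℝ × ℝ)) : ∀ (s₁ t₁ : ℝ) (Y : H →L[ℂ] H), Y ∈ 𝒩.alg →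
    s₁ ∈ Icc (0:ℝ) 1 → t₁ ∈ Icc (0:ℝ) 1 → ‖𝒩.cor Y s₁ t₁‖ < ρ →
    (∀ p ∈ l, p.1 ∈ Icc (0:ℝ) 1 ∧ p.2 ∈ Icc (0:ℝ) 1 ∧ s₁ ≤ p.1 ∧ ‖𝒩.cor Y p.1 p.2‖ < ρ) →
    l.Pairwise (fun a b => a.1 ≤ b.1) →
    ∃ Y' ∈ 𝒩.alg, ‖Y'‖ < ρ ∧ 𝒩.cor Y' s₁ t₁ = 𝒩.cor Y s₁ t₁ ∧
      ∀ p ∈ l, 𝒩.cor Y' p.1 p.2 = 𝒩.cor Y p.1 p.2 := by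
  induction l with
  | nil =>
    intro s₁ t₁ Y hY hs ht hn _ _
    refine ⟨𝒩.cor Y s₁ t₁, alg_cor hY hs ht, hn, ?_, by simp⟩
    exact (cor_mono hs ht hs ht le_rfl le_rfl).symm
  | cons p l ih =>
    intro s₁ t₁ Y hY hs ht hn hl hp
    rw [List.pairwise_cons] at hp
    obtain ⟨hp1, hp2, hp3, hp4⟩ := hl p (by simp)
    rcases le_total p.2 t₁ with h | h
    · obtain ⟨Y', a1, a2, a3, a4⟩ := ih s₁ t₁ Y hY hs ht hn
        (fun q hq => hl q (by simp [hq])) hp.2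
      refine ⟨Y', a1, a2, a3, ?_⟩
      intro q hq
      rcases List.mem_cons.1 hq with rfl | hq
      · exact cor_congr hp1 hp2 hs ht hp3 h a3
      · exact a4 q hq
    · obtain ⟨Z, z1, z2, z3, z4⟩ := merge hY hs ht hp1 hp2 hp3 h hn hp4
      obtain ⟨Y', a1, a2, a3, a4⟩ := ih s₁ p.2 Z z1 hs hp2 z2
        (fun q hq => by
          obtain ⟨b1, b2, b3, b4⟩ := hl q (by simp [hq])
          refine ⟨b1, b2, b3, ?_⟩
          rwa [z4 _ _ b1 (hp.1 q hq)]) hp.2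
      refine ⟨Y', a1, a2, ?_, ?_⟩
      · rw [← z3]; exact cor_congr hs ht hs hp2 le_rfl h a3
      · intro q hq
        rcases List.mem_cons.1 hq with rfl | hq
        · rw [← z4 _ _ hp1 le_rfl]
          exact cor_congr hp1 hp2 hs hp2 hp3 le_rfl a3
        · rw [a4 q hq]
          exact z4 _ _ (hl q (by simp [hq])).1 (hp.1 q hq)

theorem finite_completion {ρ : ℝ} (hρ : 0 < ρ) (l : List (ℝ × ℝ)) (Y : H →L[ℂ] H) (hY : Y ∈ 𝒩.alg)
    (hl : ∀ p ∈ l, p.1 ∈ Icc (0:ℝ) 1 ∧ p.2 ∈ Icc (0:ℝ) 1 ∧ ‖𝒩.cor Y p.1 p.2‖ < ρ) :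
    ∃ Y' ∈ 𝒩.alg, ‖Y'‖ < ρ ∧ ∀ p ∈ l, 𝒩.cor Y' p.1 p.2 = 𝒩.cor Y p.1 p.2 := by
  classical
  set l' := l.mergeSort (fun a b => decide (a.1 ≤ b.1)) with hl'
  have hmem : ∀ p, p ∈ l' ↔ p ∈ l := fun p => by rw [hl', List.mem_mergeSort]
  have hsort : l'.Pairwise (fun a b => a.1 ≤ b.1) := by
    have := List.pairwise_mergeSort (le := fun a b : ℝ × ℝ => decide (a.1 ≤ b.1))
      (by intro a b c; simpa using fun h1 h2 => le_trans h1 h2)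
      (by intro a b; simpa using le_total a.1 b.1) l
    simpa using this
  clear_value l'
  rcases l' with _ | ⟨p, l'⟩
  · refine ⟨0, alg_zero, by simpa using hρ, fun p hp => ?_⟩
    rw [← hmem] at hp; simp at hp
  · rw [List.pairwise_cons] at hsort
    have hp := hl p ((hmem p).1 (by simp))
    obtain ⟨Y', a1, a2, a3, a4⟩ := finite_sorted l' p.1 p.2 Y hY hp.1 hp.2.1 hp.2.2
      (fun q hq => by
        have := hl q ((hmem q).1 (by simp [hq]))
        exact ⟨this.1, this.2.1, hsort.1 q hq, this.2.2⟩) hsort.2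
    refine ⟨Y', a1, a2, fun q hq => ?_⟩
    rw [← hmem] at hq
    rcases List.mem_cons.1 hq with rfl | hq
    · exact a3
    · exact a4 q hq

end ContinuousNest

theorem proj_inner_self {P : H →L[ℂ] H} (hP : IsStarProjection P) (x y : H) :
    (inner ℂ (P x) (P y) : ℂ) = inner ℂ (P x) y := by
  have : P.adjoint = P := hP.2
  have h2 : P (P x) = P x := congrArg (fun f : H →L[ℂ] H => f x) hP.1
  conv_lhs => rw [← ContinuousLinearMap.adjoint_inner_left, this, h2]

theorem proj_inner_symm {P : H →L[ℂ] H} (hP : IsStarProjection P) (x y : H) :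
    (inner ℂ (P x) y : ℂ) = inner ℂ x (P y) := by
  have : P.adjoint = P := hP.2
  rw [← ContinuousLinearMap.adjoint_inner_left, this]

theorem re_le_norm_mul (x y : H) : (inner ℂ x y : ℂ).re ≤ ‖x‖ * ‖y‖ :=
  (Complex.re_le_norm _).trans (norm_inner_le_norm _ _)

theorem resolvent_est (V W : H →L[ℂ] H) {δ ε : ℝ} (hδ : 0 < δ) (hε : 0 < ε) (hε1 : ε ≤ 1)
    (hTW : (V + (δ : ℂ) • (1 : H →L[ℂ] H)) * W = 1)
    (hV : ∀ y, -(ε * δ / 8) * ‖y‖ ^ 2 ≤ (inner ℂ (V y) y : ℂ).re) :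
    (∀ x, ‖(1 - (δ : ℂ) • W) x‖ ^ 2 + ‖x - (1 - (δ : ℂ) • W) x‖ ^ 2 ≤ (1 + ε) * ‖x‖ ^ 2) ∧
    ∀ f, (∀ y, 1 / 2 * ‖(inner ℂ f y : ℂ)‖ ^ 2 - (ε * δ / 8) * ‖y‖ ^ 2 ≤ (inner ℂ (V y) y : ℂ).re) →
      ‖f - (1 - (δ : ℂ) • W) f‖ ^ 2 ≤ δ := by
  have hx : ∀ x, V (W x) + (δ : ℂ) • W x = x := fun x =>
    congrArg (fun f : H →L[ℂ] H => f x) hTW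
  have hG : ∀ x, (1 - (δ : ℂ) • W) x = V (W x) := by
    intro x
    have := hx x
    calc (1 - (δ : ℂ) • W) x = x - (δ : ℂ) • W x := rfl
      _ = V (W x) := by nth_rewrite 1 [← this]; abel
  have hG' : ∀ x, x - (1 - (δ : ℂ) • W) x = (δ : ℂ) • W x := by
    intro x
    change x - (x - (δ : ℂ) • W x) = _
    abel
  have hnδ : ∀ y : H, ‖(δ : ℂ) • y‖ = δ * ‖y‖ := fun y => by
    rw [norm_smul, Complex.norm_real, Real.norm_of_nonneg hδ.le]
  have hself : ∀ y : H, (inner ℂ y y : ℂ).re = ‖y‖ ^ 2 := fun y => inner_self_eq_norm_sq (𝕜 := ℂ) y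
  have hxy : ∀ x, (inner ℂ x (W x) : ℂ).re = (inner ℂ (V (W x)) (W x) : ℂ).re + δ * ‖W x‖ ^ 2 := by
    intro x
    nth_rewrite 1 [← hx x]
    rw [inner_add_left, inner_smul_left, Complex.add_re, Complex.conj_ofReal,
      Complex.re_ofReal_mul, hself]
  constructor
  · intro x
    rw [hG', hG, hnδ]
    set y := W x with hy
    have h1 : ‖x‖ ^ 2 = ‖V y‖ ^ 2 + 2 * (δ * (inner ℂ (V y) y : ℂ).re) + (δ * ‖y‖) ^ 2 := by
      nth_rewrite 1 [← hx x]
      rw [norm_add_sq (𝕜 := ℂ), hnδ, inner_smul_right]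
      have : RCLike.re ((δ : ℂ) * inner ℂ (V y) y) = δ * (inner ℂ (V y) y : ℂ).re :=
        Complex.re_ofReal_mul _ _
      rw [this]
    have h2 := hV y
    have h3 := hxy x
    have h4 := re_le_norm_mul x y
    rw [← hy] at h3
    -- ‖y‖ ≤ 2 ‖x‖ / δ
    have h5 : δ / 2 * ‖y‖ ^ 2 ≤ ‖x‖ * ‖y‖ := by
      have : ε * δ / 8 * ‖y‖ ^ 2 ≤ δ / 2 * ‖y‖ ^ 2 := by
        refine mul_le_mul_of_nonneg_right ?_ (by positivity)
        nlinarith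
      nlinarith
    have h6 : δ * ‖y‖ ≤ 2 * ‖x‖ := by
      rcases (norm_nonneg y).eq_or_lt with h | h
      · rw [← h]; simp
      · by_contra! hcon
        nlinarith
    have h7 : (δ * ‖y‖) ^ 2 ≤ (2 * ‖x‖) ^ 2 := by gcongr
    have h8 : 2 * (δ * (inner ℂ (V y) y : ℂ).re) ≥ - (ε / 4) * (δ * ‖y‖) ^ 2 := by nlinarith
    nlinarith
  · intro f hf
    rw [hG', hnδ]
    set y := W f with hy
    have h1 := hf y
    have h2 := hxy f
    rw [← hy] at h2
    have h3 : (inner ℂ f y : ℂ).re ≤ ‖(inner ℂ f y : ℂ)‖ := Complex.re_le_norm _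
    have : ε * δ / 8 * ‖y‖ ^ 2 ≤ δ / 2 * ‖y‖ ^ 2 := by
      refine mul_le_mul_of_nonneg_right ?_ (by positivity)
      nlinarith
    have h4 : δ * ‖y‖ ^ 2 ≤ 1 := by nlinarith [sq_nonneg (‖(inner ℂ f y : ℂ)‖ - 1)]
    nlinarith

theorem tendsto_unif_on_cpt {T : ℕ → H →L[ℂ] H} {M : ℝ} (hM : ∀ m, ‖T m‖ ≤ M)
    (hT : ∀ x, Tendsto (fun m => T m x) atTop (𝓝 0)) {C : H →L[ℂ] H} (hC : IsCompactOperator ⇑C) :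
    Tendsto (fun m => ‖T m * C‖) atTop (𝓝 0) := by
  obtain ⟨K, hK, hKC⟩ := hC.image_closedBall_subset_compact (f := C.toLinearMap) 1
  have hM0 : 0 ≤ M := (norm_nonneg _).trans (hM 0)
  rw [Metric.tendsto_atTop]
  intro ε hε
  obtain ⟨S, hSK, hSf, hS⟩ := hK.finite_cover_balls (e := ε / (4 * (M + 1))) (by positivity)
  have h1 : ∀ᶠ m in atTop, ∀ x ∈ S, ‖T m x‖ < ε / 4 := by
    rw [eventually_all_finite hSf]
    intro x _
    have := (hT x).norm
    rw [norm_zero] at this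
    exact this.eventually_lt_const (by positivity)
  obtain ⟨m0, hm0⟩ := eventually_atTop.1 h1
  refine ⟨m0, fun m hm => ?_⟩
  have h2 : ‖T m * C‖ ≤ ε / 2 := by
    refine ContinuousLinearMap.opNorm_le_of_unit_norm (by positivity) ?_
    intro x hx
    have hxC : C x ∈ K := hKC ⟨x, by simp [hx], rfl⟩
    obtain ⟨y, hyS, hy⟩ := mem_iUnion₂.1 (hS hxC)
    rw [Metric.mem_ball, dist_eq_norm] at hy
    have h3 : (T m * C) x = T m (C x - y) + T m y := by
      rw [← map_add, sub_add_cancel]; rfl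
    rw [h3]
    have h4 : ‖T m (C x - y)‖ ≤ M * (ε / (4 * (M + 1))) :=
      ((T m).le_of_opNorm_le (hM m) _).trans (by gcongr)
    have h5 : M * (ε / (4 * (M + 1))) ≤ ε / 4 := by
      rw [← mul_div_assoc, div_le_div_iff₀ (by positivity) (by positivity)]
      nlinarith
    have h6 := hm0 m hm y hyS
    linarith [norm_add_le (T m (C x - y)) (T m y)]
  rw [Real.dist_eq, sub_zero, abs_of_nonneg (norm_nonneg _)]
  linarith

theorem tendsto_unif_on_cpt' {T : ℕ → H →L[ℂ] H} {M : ℝ} (hM : ∀ m, ‖T m‖ ≤ M)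
    (hT : ∀ x, Tendsto (fun m => (T m).adjoint x) atTop (𝓝 0)) {C : H →L[ℂ] H}
    (hC : IsCompactOperator ⇑C) :
    Tendsto (fun m => ‖C * T m‖) atTop (𝓝 0) := by
  have h1 := tendsto_unif_on_cpt (T := fun m => (T m).adjoint) (M := M)
    (fun m => by simpa using hM m) hT (cpt_mul_left C.adjoint hC)
  have h2 : ∀ m, ‖C * T m‖ ^ 2 ≤ ‖(T m).adjoint * (C.adjoint * C)‖ * M := by
    intro m
    have h3 : ‖C * T m‖ ^ 2 = ‖star (C * T m) * (C * T m)‖ := by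
      rw [CStarRing.norm_star_mul_self, sq]
    have h4 : star (C * T m) * (C * T m) = ((T m).adjoint * (C.adjoint * C)) * T m := by
      rw [star_mul]; simp only [mul_assoc]; rfl
    rw [h3, h4]
    exact (norm_mul_le _ _).trans (by gcongr; exact hM m)
  have h5 : Tendsto (fun m => ‖C * T m‖ ^ 2) atTop (𝓝 0) := by
    refine squeeze_zero (fun m => by positivity) h2 ?_
    simpa using h1.mul_const M
  have h6 := h5.sqrt
  simpa [Real.sqrt_sq] using h6

namespace ContinuousNest
variable {𝒩 : ContinuousNest H}

theorem exists_V1 (f : H) {η : ℝ} (hη : 0 < η) : ∃ V ∈ 𝒩.alg, IsCompactOperator ⇑V ∧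
    ∀ y, 1 / 2 * ‖(inner ℂ f y : ℂ)‖ ^ 2 - η * ‖y‖ ^ 2 ≤ (inner ℂ (V y) y : ℂ).re := by
  have huc := isCompact_Icc.uniformContinuousOn_of_continuous (𝒩.contOn f)
  rw [Metric.uniformContinuousOn_iff] at huc
  obtain ⟨δ, hδ, huc⟩ := huc (Real.sqrt η) (Real.sqrt_pos.2 hη)
  obtain ⟨n, hn⟩ := exists_nat_gt (1 / δ)
  have hn0 : (0:ℝ) < n := lt_trans (by positivity) hn
  set τ : ℕ → ℝ := fun j => min (j / n) 1 with hτ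
  have hτm : ∀ j, τ j ∈ Icc (0:ℝ) 1 := fun j => ⟨by positivity, min_le_right _ _⟩
  have hτle : ∀ j, τ j ≤ τ (j + 1) := fun j => by
    simp only [hτ]; gcongr; linarith
  have hτd : ∀ j, τ (j+1) - τ j ≤ 1 / n := by
    intro j
    simp only [hτ]
    push_cast
    have : ((j:ℝ) + 1) / n = j / n + 1 / n := by ring
    rw [this]
    have : (0:ℝ) < 1 / n := by positivity
    rcases le_total ((j:ℝ) / n) 1 with h | h
    · rw [min_eq_left h]; linarith [min_le_left ((j:ℝ) / n + 1 / n) 1]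
    · rw [min_eq_right h]; linarith [min_le_right ((j:ℝ) / n + 1 / n) 1]
  have hτ0 : τ 0 = 0 := by simp [hτ]
  have hτn : τ n = 1 := by simp [hτ, hn0.ne']
  set Δ : ℕ → H →L[ℂ] H := fun j => 𝒩.N (τ (j+1)) - 𝒩.N (τ j) with hΔ
  have hΔp : ∀ j, IsStarProjection (Δ j) := fun j => isStarProj_sub (hτm _) (hτm _) (hτle j)
  have hΔf : ∀ j, ‖Δ j f‖ ^ 2 ≤ η := by
    intro j
    have h1 := huc (τ (j+1)) (hτm _) (τ j) (hτm _) (by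
      rw [Real.dist_eq, abs_of_nonneg (by linarith [hτle j])]
      refine (hτd j).trans_lt ?_
      rw [div_lt_iff₀ hn0]
      rw [div_lt_iff₀ hδ] at hn
      linarith)
    rw [dist_eq_norm] at h1
    have h2 : Δ j f = 𝒩.N (τ (j+1)) f - 𝒩.N (τ j) f := rfl
    rw [h2, ← Real.sq_sqrt hη.le]
    gcongr
  set R := InnerProductSpace.rankOne ℂ f f with hR
  refine ⟨∑ j ∈ Finset.range n, 𝒩.N (τ j) * R * Δ j, ?_, ?_, ?_⟩
  · refine alg_sum _ _ fun j _ => ?_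
    have : 𝒩.N (τ j) * R * Δ j = 𝒩.N (τ j) * (R * 𝒩.N (τ (j+1))) * (1 - 𝒩.N (τ j)) := by
      simp only [hΔ, mul_assoc]
      rw [mul_sub (𝒩.N (τ (j+1))), N_mul_ge (hτm _) (hτm _) (hτle j), mul_one]
    rw [this]
    exact alg_corner _ (hτm _) (hτm _) le_rfl
  · refine cpt_sum _ _ fun j _ => ?_
    refine cpt_mul_right _ (cpt_mul_left _ ?_)
    have h1 : IsCompactOperator ⇑(ContinuousLinearMap.toSpanSingleton ℂ f) :=
      isCompactOperator_of_locallyCompactSpace_rng (ContinuousLinearMap.toSpanSingleton ℂ f)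
    have h2 : R = (ContinuousLinearMap.toSpanSingleton ℂ f).comp (innerSL ℂ f) := by
      ext z
      rw [hR, InnerProductSpace.rankOne_apply]; rfl
    rw [h2]
    exact h1.comp_clm (innerSL ℂ f)
  · intro y
    set a : ℕ → ℂ := fun j => inner ℂ (𝒩.N (τ j) f) y with ha
    have had : ∀ j, (inner ℂ f (Δ j y) : ℂ) = a (j+1) - a j := by
      intro j
      simp only [ha, hΔ]
      rw [← proj_inner_symm (hΔp j)]
      simp [hΔ, inner_sub_left]
    have hin : ∀ j, (inner ℂ ((𝒩.N (τ j) * R * Δ j) y) y : ℂ).re =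
        1/2 * (‖a (j+1)‖ ^ 2 - ‖a j‖ ^ 2) - 1/2 * ‖a (j+1) - a j‖ ^ 2 := by
      intro j
      have : (𝒩.N (τ j) * R * Δ j) y = (a (j+1) - a j) • 𝒩.N (τ j) f := by
        change 𝒩.N (τ j) (R (Δ j y)) = _
        rw [hR, InnerProductSpace.rankOne_apply, map_smul, had]
      rw [this, inner_smul_left]
      change ((starRingEnd ℂ) (a (j+1) - a j) * a j).re = _
      simp only [← Complex.normSq_eq_norm_sq, Complex.normSq_apply]
      simp
      ring
    have hΔy : ∀ j, ‖Δ j y‖ ^ 2 = (inner ℂ (𝒩.N (τ (j+1)) y) y : ℂ).re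
        - (inner ℂ (𝒩.N (τ j) y) y : ℂ).re := by
      intro j
      have : (inner ℂ (Δ j y) (Δ j y) : ℂ).re = ‖Δ j y‖ ^ 2 := inner_self_eq_norm_sq (𝕜 := ℂ) _
      rw [← this, proj_inner_self (hΔp j), ← Complex.sub_re, ← inner_sub_left]
      rfl
    have hbd : ∀ j, ‖a (j+1) - a j‖ ^ 2 ≤ η * ‖Δ j y‖ ^ 2 := by
      intro j
      rw [← had, ← proj_inner_symm (hΔp j), ← proj_inner_self (hΔp j)]
      have := norm_inner_le_norm (𝕜 := ℂ) (Δ j f) (Δ j y)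
      calc _ ≤ (‖Δ j f‖ * ‖Δ j y‖) ^ 2 := by gcongr
        _ = ‖Δ j f‖ ^ 2 * ‖Δ j y‖ ^ 2 := by ring
        _ ≤ _ := by gcongr; exact hΔf j
    have hself : (inner ℂ y y : ℂ).re = ‖y‖ ^ 2 := inner_self_eq_norm_sq (𝕜 := ℂ) y
    have hsum : ∑ j ∈ Finset.range n, ‖Δ j y‖ ^ 2 = ‖y‖ ^ 2 := by
      simp only [hΔy]
      rw [Finset.sum_range_sub (fun j => (inner ℂ (𝒩.N (τ j) y) y : ℂ).re), hτ0, hτn, 𝒩.N_zero,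
        𝒩.N_one]
      rw [ContinuousLinearMap.one_apply, hself]; simp
    have hVy : (inner ℂ ((∑ j ∈ Finset.range n, 𝒩.N (τ j) * R * Δ j) y) y : ℂ).re
        = 1/2 * (‖a n‖ ^ 2 - ‖a 0‖ ^ 2) - 1/2 * ∑ j ∈ Finset.range n, ‖a (j+1) - a j‖ ^ 2 := by
      rw [ContinuousLinearMap.sum_apply, sum_inner, Complex.re_sum]
      simp only [hin]
      rw [Finset.sum_sub_distrib, ← Finset.mul_sum, ← Finset.mul_sum,
        Finset.sum_range_sub (fun j => ‖a j‖ ^ 2)]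
    have han : a n = inner ℂ f y := by simp [ha, hτn, 𝒩.N_one]
    have ha0 : a 0 = 0 := by simp [ha, hτ0, 𝒩.N_zero]
    have hs2 : ∑ j ∈ Finset.range n, ‖a (j+1) - a j‖ ^ 2 ≤ η * ‖y‖ ^ 2 := by
      rw [← hsum, Finset.mul_sum]
      exact Finset.sum_le_sum fun j _ => hbd j
    rw [hVy, han, ha0]
    have : 0 ≤ η * ‖y‖ ^ 2 := by positivity
    simp
    linarith

theorem exists_V (l : List H) : ∀ {η : ℝ}, 0 < η → ∃ V ∈ 𝒩.alg, IsCompactOperator ⇑V ∧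
    (∀ y, -η * ‖y‖ ^ 2 ≤ (inner ℂ (V y) y : ℂ).re) ∧
    ∀ f ∈ l, ∀ y, 1 / 2 * ‖(inner ℂ f y : ℂ)‖ ^ 2 - η * ‖y‖ ^ 2 ≤ (inner ℂ (V y) y : ℂ).re := by
  induction l with
  | nil =>
    intro η hη
    refine ⟨0, alg_zero, cpt_zero, fun y => ?_, by simp⟩
    simp; positivity
  | cons g l ih =>
    intro η hη
    obtain ⟨V, v1, v2, v3, v4⟩ := ih (half_pos hη)
    obtain ⟨U, u1, u2, u3⟩ := exists_V1 (𝒩 := 𝒩) g (half_pos hη)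
    have hadd : ∀ y, (inner ℂ ((V + U) y) y : ℂ).re
        = (inner ℂ (V y) y : ℂ).re + (inner ℂ (U y) y : ℂ).re := by
      intro y; simp [inner_add_left]
    refine ⟨V + U, alg_add v1 u1, cpt_add v2 u2, fun y => ?_, fun f hf y => ?_⟩
    · rw [hadd]
      have := u3 y
      have := v3 y
      have : 0 ≤ 1 / 2 * ‖(inner ℂ g y : ℂ)‖ ^ 2 := by positivity
      linarith
    · rw [hadd]
      have h0 := u3 y
      have h1 := v3 y
      have h2 : 0 ≤ 1 / 2 * ‖(inner ℂ g y : ℂ)‖ ^ 2 := by positivity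
      rcases List.mem_cons.1 hf with rfl | hf
      · linarith
      · linarith [v4 f hf y]

end ContinuousNest

namespace ContinuousNest
variable {𝒩 : ContinuousNest H}

theorem exists_G (l : List H) {δ ε : ℝ} (hδ : 0 < δ) (hε : 0 < ε) (hε1 : ε ≤ 1) :
    ∃ G ∈ 𝒩.alg, IsCompactOperator ⇑G ∧
    (∀ x, ‖G x‖ ^ 2 + ‖x - G x‖ ^ 2 ≤ (1 + ε) * ‖x‖ ^ 2) ∧
    (∀ x, ‖G.adjoint x‖ ^ 2 + ‖x - G.adjoint x‖ ^ 2 ≤ (1 + ε) * ‖x‖ ^ 2) ∧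
    (∀ f ∈ l, ‖f - G f‖ ^ 2 ≤ δ) ∧ (∀ f ∈ l, ‖f - G.adjoint f‖ ^ 2 ≤ δ) := by
  obtain ⟨V, v1, v2, v3, v4⟩ := exists_V (𝒩 := 𝒩) l (η := ε * δ / 8) (by positivity)
  set T := V + (δ : ℂ) • (1 : H →L[ℂ] H) with hT
  have hself : ∀ y : H, (inner ℂ y y : ℂ).re = ‖y‖ ^ 2 := fun y => inner_self_eq_norm_sq (𝕜 := ℂ) y
  have hco : ∀ x, ‖x‖ ^ 2 * (δ / 2) ≤ ‖(inner ℂ (T x) x : ℂ)‖ := by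
    intro x
    refine le_trans ?_ (Complex.re_le_norm _)
    have : T x = V x + (δ : ℂ) • x := rfl
    rw [this, inner_add_left, inner_smul_left, Complex.add_re, Complex.conj_ofReal,
      Complex.re_ofReal_mul, hself]
    have := v3 x
    have : ε * δ / 8 * ‖x‖ ^ 2 ≤ δ / 2 * ‖x‖ ^ 2 := by
      refine mul_le_mul_of_nonneg_right ?_ (by positivity)
      nlinarith
    nlinarith
  have hu : IsUnit T := ContinuousLinearMap.isUnit_of_forall_le_norm_inner_map T
      (c := ⟨δ / 2, by positivity⟩) (by exact_mod_cast half_pos hδ) hco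
  obtain ⟨U, hU⟩ := hu
  set W : H →L[ℂ] H := ↑U⁻¹ with hW
  have hTW : T * W = 1 := by rw [← hU]; exact U.mul_inv
  have hWT : W * T = 1 := by rw [← hU]; exact U.inv_mul
  have hTA : T ∈ 𝒩.alg := alg_add v1 (alg_smul _ alg_one)
  have hWA : W ∈ 𝒩.alg := by
    intro t ht
    set p := 𝒩.N t with hp
    have h1 : (1 - p) * (T * ((1 - p) * W * p)) = 0 := by
      have e1 := mem_alg_iff.1 hTA t ht
      rw [← hp] at e1
      have : T * ((1 - p) * W * p) = (T * W) * p - (T * p) * W * p := by noncomm_ring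
      rw [this, hTW, e1]
      have h2 : (1 - p) * p = 0 := by rw [sub_mul, one_mul, hp, N_mul_self ht, sub_self]
      calc (1 - p) * (1 * p - p * T * p * W * p)
          = (1 - p) * p - (1 - p) * p * (T * p * W * p) := by noncomm_ring
        _ = 0 := by rw [h2]; simp
    ext x
    set z := ((1 - p) * W * p) x with hz
    have hz1 : (1 - p) z = z := by
      have : (1 - p) * ((1 - p) * W * p) = (1 - p) * W * p := by
        rw [← mul_assoc, ← mul_assoc, (isStarProj_compl (𝒩 := 𝒩) ht).1]
      exact congrArg (fun f : H →L[ℂ] H => f x) this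
    have hz2 : (1 - p) (T z) = 0 := congrArg (fun f : H →L[ℂ] H => f x) h1
    have h3 := hco z
    have h4 : (inner ℂ (T z) z : ℂ) = 0 := by
      conv_lhs => rw [← hz1]
      rw [← proj_inner_symm (isStarProj_compl (𝒩 := 𝒩) ht), hz1]
      change inner ℂ ((1 - p) (T z)) z = 0
      rw [hz2, inner_zero_left]
    rw [h4, norm_zero] at h3
    have h5 : ‖z‖ ^ 2 ≤ 0 := by
      by_contra! h
      have : 0 < ‖z‖ ^ 2 * (δ / 2) := by positivity
      linarith
    have : ‖z‖ = 0 := by nlinarith [norm_nonneg z]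
    exact norm_eq_zero.1 this
  have hTW' : (V.adjoint + (δ : ℂ) • (1 : H →L[ℂ] H)) * W.adjoint = 1 := by
    have h := congrArg star hWT
    rw [star_mul, star_one, hT, star_add, star_smul, star_one] at h
    simpa [ContinuousLinearMap.star_eq_adjoint] using h
  have hre : ∀ y, (inner ℂ (V.adjoint y) y : ℂ).re = (inner ℂ (V y) y : ℂ).re := by
    intro y
    rw [ContinuousLinearMap.adjoint_inner_left, ← inner_conj_symm, Complex.conj_re]
  have r1 := resolvent_est V W hδ hε hε1 hTW (fun y => by simpa using v3 y)
  have r2 := resolvent_est V.adjoint W.adjoint hδ hε hε1 hTW'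
    (fun y => by rw [hre]; simpa using v3 y)
  have hadj : (1 - (δ : ℂ) • W).adjoint = 1 - (δ : ℂ) • W.adjoint := by
    have : star (1 - (δ : ℂ) • W) = 1 - (δ : ℂ) • star W := by
      rw [star_sub, star_one, star_smul]
      simp
    exact this
  refine ⟨1 - (δ : ℂ) • W, alg_sub alg_one (alg_smul _ hWA), ?_, r1.1, ?_, ?_, ?_⟩
  · have : 1 - (δ : ℂ) • W = V * W := by
      rw [← hTW, hT, add_mul, smul_mul_assoc, one_mul]; abel
    rw [this]; exact cpt_mul_right _ v2
  · rw [hadj]; exact r2.1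
  · intro f hf; exact r1.2 f (v4 f hf)
  · rw [hadj]; intro f hf; exact r2.2 f (fun y => by rw [hre]; exact v4 f hf y)

end ContinuousNest

theorem strong_of_dense {T : ℕ → H →L[ℂ] H} {M : ℝ} (hM : ∀ m, ‖T m‖ ≤ M)
    {d : ℕ → H} (hd : DenseRange d) (h : ∀ k, Tendsto (fun m => T m (d k)) atTop (𝓝 0)) (x : H) :
    Tendsto (fun m => T m x) atTop (𝓝 0) := by
  have hM0 : 0 ≤ M := (norm_nonneg _).trans (hM 0)
  rw [Metric.tendsto_atTop]
  intro ε hε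
  obtain ⟨k, hk⟩ := hd.exists_dist_lt x (ε := ε / (2 * (M + 1))) (by positivity)
  obtain ⟨m0, hm0⟩ := Metric.tendsto_atTop.1 (h k) (ε / 2) (by positivity)
  refine ⟨m0, fun m hm => ?_⟩
  have h1 := hm0 m hm
  rw [dist_zero_right] at h1 ⊢
  rw [dist_eq_norm] at hk
  have h3 : T m x = T m (x - d k) + T m (d k) := by rw [← map_add, sub_add_cancel]
  have h4 : ‖T m (x - d k)‖ ≤ M * (ε / (2 * (M + 1))) :=
    ((T m).le_of_opNorm_le (hM m) _).trans (by gcongr)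
  have h5 : M * (ε / (2 * (M + 1))) ≤ ε / 2 := by
    rw [← mul_div_assoc, div_le_div_iff₀ (by positivity) (by positivity)]
    nlinarith
  rw [h3]
  linarith [norm_add_le (T m (x - d k)) (T m (d k))]

/-- data of a good approximate unit -/
structure AppUnit (𝒩 : ContinuousNest H) (G : ℕ → H →L[ℂ] H) : Prop where
  alg : ∀ m, G m ∈ 𝒩.alg
  cpt : ∀ m, IsCompactOperator ⇑(G m)
  col : ∀ m x, ‖G m x‖ ^ 2 + ‖x - G m x‖ ^ 2 ≤ (1 + 1 / (m + 1)) * ‖x‖ ^ 2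
  row : ∀ m x, ‖(G m).adjoint x‖ ^ 2 + ‖x - (G m).adjoint x‖ ^ 2 ≤ (1 + 1 / (m + 1)) * ‖x‖ ^ 2
  right : ∀ C : H →L[ℂ] H, IsCompactOperator ⇑C → Tendsto (fun m => ‖C * (1 - G m)‖) atTop (𝓝 0)
  left : ∀ C : H →L[ℂ] H, IsCompactOperator ⇑C → Tendsto (fun m => ‖(1 - G m) * C‖) atTop (𝓝 0)
  str : ∀ x, Tendsto (fun m => (1 - G m) x) atTop (𝓝 0)

theorem exists_appUnit [TopologicalSpace.SeparableSpace H] (𝒩 : ContinuousNest H) :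
    ∃ G, AppUnit 𝒩 G := by
  set d := TopologicalSpace.denseSeq H with hd
  have hdd : DenseRange d := TopologicalSpace.denseRange_denseSeq H
  have hpos : ∀ m : ℕ, (0:ℝ) < 1 / ((m:ℝ) + 1) := fun m => by positivity
  have hle : ∀ m : ℕ, 1 / ((m:ℝ) + 1) ≤ 1 := fun m => by
    rw [div_le_one (by positivity)]; linarith [(Nat.cast_nonneg m : (0:ℝ) ≤ m)]
  choose G g1 g2 g3 g4 g5 g6 using fun m : ℕ =>
    ContinuousNest.exists_G (𝒩 := 𝒩) ((List.range m).map d) (hpos m) (hpos m) (hle m)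
  have bd : ∀ (T : H →L[ℂ] H) (m : ℕ),
      (∀ x, ‖T x‖ ^ 2 + ‖x - T x‖ ^ 2 ≤ (1 + 1 / ((m:ℝ) + 1)) * ‖x‖ ^ 2) → ‖1 - T‖ ≤ 2 := by
    intro T m h
    refine ContinuousLinearMap.opNorm_le_bound _ (by norm_num) fun x => ?_
    have h1 := h x
    have h2 : ‖x - T x‖ ^ 2 ≤ (2 * ‖x‖) ^ 2 := by
      nlinarith [hle m, sq_nonneg ‖x‖, sq_nonneg ‖T x‖]
    exact le_of_sq_le_sq h2 (by positivity)
  have cv : ∀ T : ℕ → H →L[ℂ] H,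
      (∀ m, ∀ f ∈ (List.range m).map d, ‖f - T m f‖ ^ 2 ≤ 1 / ((m:ℝ) + 1)) →
      ∀ k, Tendsto (fun m => (1 - T m) (d k)) atTop (𝓝 0) := by
    intro T h k
    rw [tendsto_zero_iff_norm_tendsto_zero]
    have h5 : Tendsto (fun m => ‖(1 - T m) (d k)‖ ^ 2) atTop (𝓝 0) := by
      refine squeeze_zero' (Eventually.of_forall fun m => by positivity) ?_
        tendsto_one_div_add_atTop_nhds_zero_nat
      filter_upwards [eventually_gt_atTop k] with m hm
      exact h m (d k) (List.mem_map.2 ⟨k, by simpa using hm, rfl⟩)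
    have h6 := h5.sqrt
    simpa [Real.sqrt_sq] using h6
  have adj1 : ∀ m, (1 - G m).adjoint = 1 - (G m).adjoint := fun m => by
    have : star (1 - G m) = 1 - star (G m) := by rw [star_sub, star_one]
    exact this
  have s1 := strong_of_dense (fun m => bd _ m (g3 m)) hdd (cv G g5)
  have s2 := strong_of_dense (fun m => bd _ m (g4 m)) hdd (cv _ g6)
  refine ⟨G, g1, g2, g3, g4, ?_, ?_, s1⟩
  · intro C hC
    exact tendsto_unif_on_cpt' (fun m => bd _ m (g3 m)) (fun x => by simpa only [adj1] using s2 x) hC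
  · intro C hC
    exact tendsto_unif_on_cpt (fun m => bd _ m (g3 m)) s1 hC

theorem norm_rowcol (P₁ P₂ Q₁ Q₂ A B : H →L[ℂ] H) {ρ c : ℝ} (hρ : 0 ≤ ρ) (hc : 0 ≤ c)
    (hA : ‖A‖ ≤ ρ) (hB : ‖B‖ ≤ ρ)
    (col : ∀ x, ‖Q₁ x‖ ^ 2 + ‖Q₂ x‖ ^ 2 ≤ c * ‖x‖ ^ 2)
    (row : ∀ z, ‖P₁.adjoint z‖ ^ 2 + ‖P₂.adjoint z‖ ^ 2 ≤ c * ‖z‖ ^ 2) :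
    ‖P₁ * A * Q₁ + P₂ * B * Q₂‖ ≤ ρ * c := by
  refine ContinuousLinearMap.opNorm_le_bound _ (by positivity) fun x => ?_
  set z := (P₁ * A * Q₁ + P₂ * B * Q₂) x with hz
  have hz' : z = P₁ (A (Q₁ x)) + P₂ (B (Q₂ x)) := rfl
  have h1 : ‖z‖ ^ 2 = (inner ℂ (P₁.adjoint z) (A (Q₁ x)) : ℂ).re
      + (inner ℂ (P₂.adjoint z) (B (Q₂ x)) : ℂ).re := by
    rw [ContinuousLinearMap.adjoint_inner_left, ContinuousLinearMap.adjoint_inner_left,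
      ← Complex.add_re, ← inner_add_right, ← hz']
    exact (inner_self_eq_norm_sq (𝕜 := ℂ) z).symm
  have h2 := re_le_norm_mul (P₁.adjoint z) (A (Q₁ x))
  have h3 := re_le_norm_mul (P₂.adjoint z) (B (Q₂ x))
  have h4 := A.le_of_opNorm_le hA (Q₁ x)
  have h5 := B.le_of_opNorm_le hB (Q₂ x)
  set p₁ := ‖P₁.adjoint z‖
  set p₂ := ‖P₂.adjoint z‖
  have hp₁ : 0 ≤ p₁ := norm_nonneg _
  have hp₂ : 0 ≤ p₂ := norm_nonneg _
  set q₁ := ‖Q₁ x‖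
  set q₂ := ‖Q₂ x‖
  have hq₁ : 0 ≤ q₁ := norm_nonneg _
  have hq₂ : 0 ≤ q₂ := norm_nonneg _
  have hcol := col x
  have hrow := row z
  have h6 : ‖z‖ ^ 2 ≤ ρ * (p₁ * q₁ + p₂ * q₂) := by
    have := mul_le_mul_of_nonneg_left h4 hp₁
    have := mul_le_mul_of_nonneg_left h5 hp₂
    nlinarith
  have h7 : p₁ * q₁ + p₂ * q₂ ≤ c * (‖z‖ * ‖x‖) := by
    refine le_of_sq_le_sq ?_ (by positivity)
    calc (p₁ * q₁ + p₂ * q₂) ^ 2 ≤ (p₁ ^ 2 + p₂ ^ 2) * (q₁ ^ 2 + q₂ ^ 2) := by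
          nlinarith [sq_nonneg (p₁ * q₂ - p₂ * q₁)]
      _ ≤ (c * ‖z‖ ^ 2) * (c * ‖x‖ ^ 2) := by gcongr
      _ = _ := by ring
  have h8 : ‖z‖ ^ 2 ≤ ‖z‖ * (ρ * c * ‖x‖) := by
    calc _ ≤ _ := h6
      _ ≤ ρ * (c * (‖z‖ * ‖x‖)) := by gcongr
      _ = _ := by ring
  rcases (norm_nonneg z).eq_or_lt with h | h
  · rw [← h]; positivity
  · rw [sq] at h8
    exact le_of_mul_le_mul_left h8 h

/-- column estimate for two members of an approximate unit -/
theorem col_two (g k : H →L[ℂ] H) {θ : ℝ} (hθ : 0 ≤ θ) (hθ1 : θ ≤ 1)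
    (hk : ∀ x, ‖k x‖ ^ 2 + ‖x - k x‖ ^ 2 ≤ (1 + θ) * ‖x‖ ^ 2)
    (hg : ∀ x, ‖g x‖ ^ 2 + ‖x - g x‖ ^ 2 ≤ (1 + θ) * ‖x‖ ^ 2)
    (hkg : ‖k * (1 - g)‖ ≤ θ) (x : H) :
    ‖k x‖ ^ 2 + ‖(1 - g) x‖ ^ 2 ≤ (1 + 22 * θ) * ‖x‖ ^ 2 := by
  have h1 : k x = k (g x) + (k * (1 - g)) x := by
    change k x = k (g x) + k (x - g x)
    rw [← map_add]; simp
  have h2 : ‖k (g x)‖ ≤ (1 + θ) * ‖g x‖ := by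
    refine le_of_sq_le_sq ?_ (by positivity)
    have := hk (g x)
    nlinarith [sq_nonneg ‖g x - k (g x)‖, sq_nonneg ‖g x‖, mul_nonneg hθ (sq_nonneg ‖g x‖),
      mul_nonneg (mul_nonneg hθ hθ) (sq_nonneg ‖g x‖)]
  have h3 := ContinuousLinearMap.le_of_opNorm_le _ hkg x
  have h4 : ‖k x‖ ≤ (1 + θ) * ‖g x‖ + θ * ‖x‖ := by
    rw [h1]; exact (norm_add_le _ _).trans (add_le_add h2 h3)
  have h5 := hg x
  have e : (1 - g) x = x - g x := rfl
  rw [e]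
  set a := ‖g x‖
  set X := ‖x‖
  have ha : 0 ≤ a := norm_nonneg _
  have hX : 0 ≤ X := norm_nonneg _
  have h6 : a ≤ 2 * X := by
    refine le_of_sq_le_sq ?_ (by positivity)
    nlinarith [sq_nonneg ‖x - g x‖, sq_nonneg X]
  have h7 : ‖k x‖ ≤ a + 3 * θ * X := by nlinarith
  have h8 : ‖k x‖ ^ 2 ≤ (a + 3 * θ * X) ^ 2 := by gcongr
  have h9 : θ * (a * X) ≤ θ * (2 * X * X) := by gcongr
  have h10 : θ * (θ * X ^ 2) ≤ θ * (1 * X ^ 2) := by gcongr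
  nlinarith

section Q
variable {𝒩 : ContinuousNest H} {G : ℕ → H →L[ℂ] H}

theorem lemmaQ (hG : AppUnit 𝒩 G) {A B : H →L[ℂ] H} {ρ ε : ℝ} (hρ : 0 ≤ ρ) (hε : 0 < ε)
    (hA : ‖A‖ ≤ ρ) (hB : ‖B‖ ≤ ρ) {𝒞 : Set (H →L[ℂ] H)} (hconv : Convex ℝ 𝒞)
    (hGC : ∀ᶠ m in atTop, G m ∈ 𝒞) :
    ∃ g ∈ 𝒞, ‖A * g + B * (1 - g)‖ < ρ + ε := by
  by_contra! hcon
  set S : Set (H →L[ℂ] H) := (fun g => A * g + B * (1 - g)) '' 𝒞 with hS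
  have hSc : Convex ℝ S := by
    rintro _ ⟨g, hg, rfl⟩ _ ⟨g', hg', rfl⟩ a b ha hb hab
    refine ⟨a • g + b • g', hconv hg hg' ha hb hab, ?_⟩
    have h1 : (1 : H →L[ℂ] H) = a • (1 : H →L[ℂ] H) + b • (1 : H →L[ℂ] H) := by
      rw [← add_smul, hab, one_smul]
    simp only
    nth_rewrite 1 [h1]
    simp only [mul_add, mul_sub, smul_add, smul_sub, mul_smul_comm]
    abel
  have hdisj : Disjoint (Metric.ball (0 : H →L[ℂ] H) (ρ + ε)) S := by
    rw [Set.disjoint_left]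
    rintro _ hx ⟨g, hg, rfl⟩
    rw [Metric.mem_ball, dist_zero_right] at hx
    exact absurd hx (not_lt.2 (hcon g hg))
  obtain ⟨f, u, hf1, hf2⟩ := RCLike.geometric_hahn_banach_open (𝕜 := ℂ)
    (convex_ball (0 : H →L[ℂ] H) (ρ + ε)) Metric.isOpen_ball hSc hdisj
  have hu : 0 < u := by
    have := hf1 0 (Metric.mem_ball_self (by positivity))
    simpa using this
  -- gap
  set lam : ℝ := (ρ + ε) / (ρ + 3 * ε / 4) with hlam
  have hden : 0 < ρ + 3 * ε / 4 := by positivity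
  have hlam1 : 1 < lam := by rw [hlam, one_lt_div hden]; linarith
  have hgap : ∀ W : H →L[ℂ] H, ‖W‖ ≤ ρ + ε / 2 → lam * (f W).re < u := by
    intro W hW
    have h1 : ((lam : ℝ) : ℂ) • W ∈ Metric.ball (0 : H →L[ℂ] H) (ρ + ε) := by
      rw [Metric.mem_ball, dist_zero_right, norm_smul, Complex.norm_real,
        Real.norm_of_nonneg (by linarith)]
      calc lam * ‖W‖ ≤ lam * (ρ + ε / 2) := by gcongr
        _ < lam * (ρ + 3 * ε / 4) := by
            apply mul_lt_mul_of_pos_left _ (by linarith)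
            linarith
        _ = ρ + ε := by rw [hlam, div_mul_cancel₀ _ hden.ne']
    have := hf1 _ h1
    rw [map_smul, smul_eq_mul] at this
    have h3 : RCLike.re ((lam : ℂ) * f W) = lam * (f W).re := Complex.re_ofReal_mul _ _
    rwa [h3] at this
  -- choose θ
  have hgap' : 0 < u - u / lam := by
    have : u / lam < u := div_lt_self hu hlam1
    linarith
  set θ₀ := min 1 (min (ε / 2 / (22 * (ρ + 1))) ((u - u / lam) / (1 + 2 * ‖f‖))) with hθ₀
  have hθ₀p : 0 < θ₀ := by
    refine lt_min one_pos (lt_min (by positivity) (by positivity))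
  obtain ⟨M, hM⟩ := eventually_atTop.1 hGC
  obtain ⟨M₁, hM₁⟩ := exists_nat_one_div_lt hθ₀p
  set M' := max M M₁ with hM'
  set θ : ℝ := 1 / ((M' : ℝ) + 1) with hθ
  have hθ0 : 0 < θ := by positivity
  have hθle : θ ≤ θ₀ := by
    refine le_trans ?_ hM₁.le
    rw [hθ]
    have : (M₁ : ℝ) ≤ M' := by exact_mod_cast le_max_right _ _
    gcongr
  have hθ1 : θ ≤ 1 := hθle.trans (min_le_left _ _)
  have hθ2 : 22 * θ * ρ ≤ ε / 2 := by
    have : θ ≤ ε / 2 / (22 * (ρ + 1)) := hθle.trans ((min_le_right _ _).trans (min_le_left _ _))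
    rw [le_div_iff₀ (by positivity)] at this
    nlinarith
  have hθ3 : θ * (1 + 2 * ‖f‖) ≤ u - u / lam := by
    have : θ ≤ (u - u / lam) / (1 + 2 * ‖f‖) :=
      hθle.trans ((min_le_right _ _).trans (min_le_right _ _))
    rwa [le_div_iff₀ (by positivity)] at this
  have hmθ : ∀ m, M' ≤ m → 1 / ((m : ℝ) + 1) ≤ θ := by
    intro m hm
    rw [hθ]
    have : (M' : ℝ) ≤ m := by exact_mod_cast hm
    gcongr
  have hcol : ∀ m, M' ≤ m → ∀ x, ‖G m x‖ ^ 2 + ‖x - G m x‖ ^ 2 ≤ (1 + θ) * ‖x‖ ^ 2 := by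
    intro m hm x
    refine (hG.col m x).trans ?_
    have := hmθ m hm
    gcongr
  have hrow : ∀ m, M' ≤ m → ∀ x,
      ‖(G m).adjoint x‖ ^ 2 + ‖x - (G m).adjoint x‖ ^ 2 ≤ (1 + θ) * ‖x‖ ^ 2 := by
    intro m hm x
    refine (hG.row m x).trans ?_
    have := hmθ m hm
    gcongr
  have hGn : ∀ m, M' ≤ m → ‖G m‖ ≤ 2 := by
    intro m hm
    refine ContinuousLinearMap.opNorm_le_bound _ (by norm_num) fun x => ?_
    refine le_of_sq_le_sq ?_ (by positivity)
    have := hcol m hm x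
    nlinarith [sq_nonneg ‖x - G m x‖, sq_nonneg ‖x‖]
  -- the supremum
  set T : Set ℝ := (fun m => (f (A * G m)).re) '' Ici M' with hT
  have hTb : BddAbove T := by
    refine ⟨‖f‖ * (ρ * 2), ?_⟩
    rintro _ ⟨m, hm, rfl⟩
    refine (Complex.re_le_norm _).trans ((f.le_opNorm _).trans ?_)
    gcongr
    exact (norm_mul_le _ _).trans (mul_le_mul hA (hGn m hm) (norm_nonneg _) hρ)
  have hTne : T.Nonempty := ⟨_, M', mem_Ici.2 le_rfl, rfl⟩
  obtain ⟨_, ⟨k, hk, rfl⟩, hk2⟩ := exists_lt_of_lt_csSup hTne (sub_lt_self (sSup T) hθ0)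
  have hk : M' ≤ k := hk
  -- choices
  have ev : ∀ {F : ℕ → ℝ}, Tendsto F atTop (𝓝 0) → ∀ᶠ m in atTop, F m ≤ θ := fun h =>
    (h.eventually_lt_const hθ0).mono fun _ => le_of_lt
  obtain ⟨k', hk'1, hk'⟩ := ((ev (hG.left _ (cpt_mul_left A (hG.cpt k)))).and
    (eventually_ge_atTop M')).exists
  obtain ⟨m', hm'1, hm'⟩ := ((ev (hG.left _ (hG.cpt k'))).and (eventually_ge_atTop M')).exists
  obtain ⟨m, ⟨hm1, hm2⟩, hm⟩ := (((ev (hG.right _ (cpt_mul_right B (hG.cpt m')))).and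
    (ev (hG.right _ (hG.cpt k)))).and (eventually_ge_atTop M')).exists
  set W := G k' * A * G k + (1 - G m') * B * (1 - G m) with hW
  have hWn : ‖W‖ ≤ ρ + ε / 2 := by
    have h1 : ‖W‖ ≤ ρ * (1 + 22 * θ) := by
      refine norm_rowcol _ _ _ _ _ _ hρ (by positivity) hA hB ?_ ?_
      · exact col_two (G m) (G k) hθ0.le hθ1 (hcol k hk) (hcol m hm) hm2
      · have e1 : (1 - G m').adjoint = 1 - (G m').adjoint := by
          have : star (1 - G m') = 1 - star (G m') := by rw [star_sub, star_one]
          exact this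
        rw [e1]
        refine col_two (G m').adjoint (G k').adjoint hθ0.le hθ1 (hrow k' hk') (hrow m' hm') ?_
        have : (G k').adjoint * (1 - (G m').adjoint) = star ((1 - G m') * G k') := by
          rw [star_mul, star_sub, star_one]; rfl
        rw [this, norm_star]; exact hm'1
    nlinarith
  have h1 := hgap W hWn
  have h2 : W = (A * G m + B * (1 - G m)) + (A * G k - A * G m) - (1 - G k') * (A * G k)
      - (G m' * B) * (1 - G m) := by
    rw [hW]; noncomm_ring
  have h3 : u ≤ (f (A * G m + B * (1 - G m))).re :=
    hf2 _ ⟨G m, hM m ((le_max_left _ _).trans hm), rfl⟩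
  have h4 : (f (A * G m)).re ≤ sSup T := le_csSup hTb ⟨m, hm, rfl⟩
  have h5 : (f ((1 - G k') * (A * G k))).re ≤ ‖f‖ * θ :=
    (Complex.re_le_norm _).trans ((f.le_opNorm _).trans (by gcongr))
  have h6 : (f (G m' * B * (1 - G m))).re ≤ ‖f‖ * θ :=
    (Complex.re_le_norm _).trans ((f.le_opNorm _).trans (by gcongr))
  have h7 : (f W).re = (f (A * G m + B * (1 - G m))).re + ((f (A * G k)).re - (f (A * G m)).re)
      - (f ((1 - G k') * (A * G k))).re - (f (G m' * B * (1 - G m))).re := by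
    rw [h2, map_sub, map_sub, map_add f _ (A * G k - A * G m), map_sub]
    simp only [Complex.sub_re, Complex.add_re]
  have h8 : u / lam ≤ (f W).re := by
    rw [h7]; simp only at hk2; nlinarith
  rw [div_le_iff₀ (by linarith)] at h8
  linarith

end Q

namespace ContinuousNest

theorem _root_.AppUnit.norm_le {𝒩 : ContinuousNest H} {G : ℕ → H →L[ℂ] H} (hG : AppUnit 𝒩 G) (m : ℕ) :
    ‖1 - G m‖ ≤ 1 + 1 / ((m:ℝ) + 1) := by
  refine ContinuousLinearMap.opNorm_le_bound _ (by positivity) fun x => ?_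
  have h1 := hG.col m x
  have h2 : (1 - G m) x = x - G m x := rfl
  rw [h2]
  have h3 : (0:ℝ) < 1 / ((m:ℝ) + 1) := by positivity
  apply abs_le_of_sq_le_sq' _ (by positivity) |>.2
  have h4 := sq_nonneg ‖G m x‖
  have h5 := sq_nonneg ‖x‖
  nlinarith [mul_nonneg h3.le h5, mul_nonneg (mul_nonneg h3.le h3.le) h5]

theorem finite_step {𝒩 : ContinuousNest H} {G : ℕ → H →L[ℂ] H} (hG : AppUnit 𝒩 G)
    {X : H →L[ℂ] H} (hX : X ∈ 𝒩.alg) {r : ℝ} (hr : 0 < r) (l : List (ℝ × ℝ))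
    (hl : ∀ p ∈ l, p.1 ∈ Icc (0:ℝ) 1 ∧ p.2 ∈ Icc (0:ℝ) 1 ∧ essNorm (𝒩.cor X p.1 p.2) < r) :
    ∃ Y ∈ 𝒩.alg, ‖Y‖ < r ∧ ∀ p ∈ l, IsCompactOperator ⇑(𝒩.cor (X - Y) p.1 p.2) := by
  have hev : ∀ p ∈ l, ∀ᶠ m in atTop, ‖𝒩.cor (X * (1 - G m)) p.1 p.2‖ < r := by
    intro p hp
    obtain ⟨h1, h2, h3⟩ := hl p hp
    obtain ⟨K, hK, hKr⟩ := exists_cpt_of_essNorm_lt h3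
    set a := ‖𝒩.cor X p.1 p.2 - K‖ with ha
    have hlim : Tendsto (fun m : ℕ => a * (1 + 1 / ((m:ℝ) + 1)) + ‖K * (1 - G m)‖) atTop
        (𝓝 (a * (1 + 0) + 0)) :=
      ((tendsto_const_nhds.add tendsto_one_div_add_atTop_nhds_zero_nat).const_mul a).add
        (hG.right K hK)
    filter_upwards [hlim.eventually (gt_mem_nhds (show a * (1 + 0) + 0 < r by simpa using hKr))]
      with m hm
    refine lt_of_le_of_lt ?_ hm
    rw [cor_mul (alg_sub alg_one (hG.alg m)) h2]
    have e : 𝒩.cor X p.1 p.2 * (1 - G m)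
      = (𝒩.cor X p.1 p.2 - K) * (1 - G m) + K * (1 - G m) := by noncomm_ring
    have hN := norm_proj_le (isStarProj (𝒩 := 𝒩) h2)
    calc _ ≤ ‖𝒩.cor X p.1 p.2 * (1 - G m)‖ * ‖𝒩.N p.2‖ := norm_mul_le _ _
      _ ≤ ‖𝒩.cor X p.1 p.2 * (1 - G m)‖ * 1 := by gcongr
      _ = ‖(𝒩.cor X p.1 p.2 - K) * (1 - G m) + K * (1 - G m)‖ := by rw [mul_one, e]
      _ ≤ ‖(𝒩.cor X p.1 p.2 - K) * (1 - G m)‖ + ‖K * (1 - G m)‖ := norm_add_le _ _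
      _ ≤ a * ‖1 - G m‖ + ‖K * (1 - G m)‖ := by gcongr; exact norm_mul_le _ _
      _ ≤ _ := by gcongr; exact hG.norm_le m
  have hev' : ∀ᶠ m in atTop, ∀ p ∈ l, ‖𝒩.cor (X * (1 - G m)) p.1 p.2‖ < r := by
    have := (Filter.eventually_all_finite (l := atTop)
      (p := fun p m => ‖𝒩.cor (X * (1 - G m)) p.1 p.2‖ < r)
      (I := {p | p ∈ l}) (List.finite_toSet l)).2 (fun p hp => hev p hp)
    exact this
  obtain ⟨m, hm⟩ := hev'.exists
  obtain ⟨Y, hY, hYr, hYl⟩ := finite_completion hr l (X * (1 - G m))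
    (alg_mul hX (alg_sub alg_one (hG.alg m))) (fun p hp => ⟨(hl p hp).1, (hl p hp).2.1, hm p hp⟩)
  refine ⟨Y, hY, hYr, fun p hp => ?_⟩
  have : 𝒩.cor (X - Y) p.1 p.2 = 𝒩.cor (X * G m) p.1 p.2 := by
    rw [cor_sub, hYl p hp, ← cor_sub]; congr 1; noncomm_ring
  rw [this]
  unfold cor
  exact cpt_mul_right _ (cpt_mul_left _ (cpt_mul_left _ (hG.cpt m)))

theorem sigma_step [TopologicalSpace.SeparableSpace H] {𝒩 : ContinuousNest H}
    {X : H →L[ℂ] H} (hX : X ∈ 𝒩.alg) {r ε : ℝ} (hr : 0 < r) (hε : 0 < ε) (p : ℕ → ℝ × ℝ)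
    (hl : ∀ k, (p k).1 ∈ Icc (0:ℝ) 1 ∧ (p k).2 ∈ Icc (0:ℝ) 1 ∧
      essNorm (𝒩.cor X (p k).1 (p k).2) < r) :
    ∃ Z ∈ 𝒩.alg, ‖Z‖ ≤ r + ε ∧ ∀ k, IsCompactOperator ⇑(𝒩.cor (X - Z) (p k).1 (p k).2) := by
  obtain ⟨G, hG⟩ := exists_appUnit 𝒩
  set d := TopologicalSpace.denseSeq H with hd
  have hdd : DenseRange d := TopologicalSpace.denseRange_denseSeq H
  have hYex : ∀ n : ℕ, ∃ Y ∈ 𝒩.alg, ‖Y‖ < r ∧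
      ∀ k ≤ n, IsCompactOperator ⇑(𝒩.cor (X - Y) (p k).1 (p k).2) := by
    intro n
    obtain ⟨Y, h1, h2, h3⟩ := finite_step hG hX hr ((List.range (n+1)).map p) (by
      intro q hq
      obtain ⟨k, _, rfl⟩ := List.mem_map.1 hq
      exact hl k)
    exact ⟨Y, h1, h2, fun k hk => h3 _ (List.mem_map.2 ⟨k, List.mem_range.2 (by omega), rfl⟩)⟩
  choose Y y1 y2 y3 using hYex
  have hpos : ∀ n : ℕ, (0:ℝ) < (1/2) ^ n := fun n => by positivity
  have hle1 : ∀ n : ℕ, ((1:ℝ)/2) ^ n ≤ 1 := fun n => pow_le_one₀ (by norm_num) (by norm_num)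
  let Inv : ℕ → (H →L[ℂ] H) → Prop := fun n Z =>
    Z ∈ 𝒩.alg ∧ ‖Z‖ ≤ r + ε * (1 - (1/2) ^ n) ∧ IsCompactOperator ⇑(Z - Y n)
  have hstep : ∀ n Z, Inv n Z → ∃ Z', Inv (n+1) Z' ∧
      (∀ k ≤ n, ‖𝒩.cor (Z' - Z) (p k).1 (p k).2‖ ≤ (1/2) ^ n) ∧
      (∀ i ≤ n, ‖(Z' - Z) (d i)‖ ≤ (2 * r + ε) * (1/2) ^ n) := by
    rintro n Z ⟨z1, z2, z3⟩
    let 𝒞 : Set (H →L[ℂ] H) := {g | g ∈ 𝒩.alg ∧ IsCompactOperator ⇑g ∧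
      (∀ k ≤ n, ‖𝒩.cor (Y (n+1) - Z) (p k).1 (p k).2 * (1 - g)‖ ≤ (1/2) ^ n) ∧
      (∀ i ≤ n, ‖(1 - g) (d i)‖ ≤ (1/2) ^ n)}
    have hconv : Convex ℝ 𝒞 := by
      rintro g ⟨g1, g2, g3, g4⟩ h ⟨h1, h2, h3, h4⟩ a b ha hb hab
      have ga : a • g = (a:ℂ) • g := (Complex.coe_smul a g).symm
      have hbb : b • h = (b:ℂ) • h := (Complex.coe_smul b h).symm
      have e1 : (1 : H →L[ℂ] H) - (a • g + b • h) = a • (1 - g) + b • (1 - h) := by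
        have : (1 : H →L[ℂ] H) = a • 1 + b • 1 := by rw [← add_smul, hab, one_smul]
        nth_rewrite 1 [this]
        simp only [smul_sub]; abel
      refine ⟨?_, ?_, ?_, ?_⟩
      · rw [ga, hbb]; exact alg_add (alg_smul _ g1) (alg_smul _ h1)
      · rw [ga, hbb]; exact cpt_add (cpt_smul _ g2) (cpt_smul _ h2)
      · intro k hk
        rw [e1, mul_add, mul_smul_comm, mul_smul_comm]
        refine (norm_add_le _ _).trans ?_
        rw [norm_smul, norm_smul, Real.norm_of_nonneg ha, Real.norm_of_nonneg hb]
        have := mul_le_mul_of_nonneg_left (g3 k hk) ha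
        have := mul_le_mul_of_nonneg_left (h3 k hk) hb
        have : ((1:ℝ)/2) ^ n = a * (1/2) ^ n + b * (1/2)^n := by rw [← add_mul, hab, one_mul]
        linarith
      · intro k hk
        rw [e1]
        change ‖a • (1 - g) (d k) + b • (1 - h) (d k)‖ ≤ _
        refine (norm_add_le _ _).trans ?_
        rw [norm_smul, norm_smul, Real.norm_of_nonneg ha, Real.norm_of_nonneg hb]
        have := mul_le_mul_of_nonneg_left (g4 k hk) ha
        have := mul_le_mul_of_nonneg_left (h4 k hk) hb
        have : ((1:ℝ)/2) ^ n = a * (1/2) ^ n + b * (1/2)^n := by rw [← add_mul, hab, one_mul]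
        linarith
    have hcc : ∀ k ≤ n, IsCompactOperator ⇑(𝒩.cor (Y (n+1) - Z) (p k).1 (p k).2) := by
      intro k hk
      have e : 𝒩.cor (Y (n+1) - Z) (p k).1 (p k).2 = 𝒩.cor (X - Y n) (p k).1 (p k).2
          - 𝒩.cor (X - Y (n+1)) (p k).1 (p k).2 - 𝒩.cor (Z - Y n) (p k).1 (p k).2 := by
        simp only [cor_sub]; abel
      rw [e]
      refine cpt_sub (cpt_sub (y3 n k hk) (y3 (n+1) k (by omega))) ?_
      exact cpt_mul_right _ (cpt_mul_left _ z3)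
    have hGC : ∀ᶠ m in atTop, G m ∈ 𝒞 := by
      have e1 : ∀ᶠ m in atTop, ∀ k ∈ Set.Iic n,
          ‖𝒩.cor (Y (n+1) - Z) (p k).1 (p k).2 * (1 - G m)‖ ≤ (1/2) ^ n := by
        rw [Filter.eventually_all_finite (Set.finite_Iic n)]
        intro k hk
        exact (hG.right _ (hcc k hk)).eventually (ge_mem_nhds (hpos n))
      have e2 : ∀ᶠ m in atTop, ∀ k ∈ Set.Iic n, ‖(1 - G m) (d k)‖ ≤ (1/2) ^ n := by
        rw [Filter.eventually_all_finite (Set.finite_Iic n)]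
        intro k hk
        have := (hG.str (d k)).norm
        rw [norm_zero] at this
        exact this.eventually (ge_mem_nhds (hpos n))
      filter_upwards [e1, e2] with m h1 h2
      exact ⟨hG.alg m, hG.cpt m, h1, h2⟩
    have hnn : 0 ≤ ε * (1 - (1/2) ^ n) := mul_nonneg hε.le (by linarith [hle1 n])
    obtain ⟨g, ⟨g1, g2, g3, g4⟩, g5⟩ := lemmaQ hG (A := Z) (B := Y (n+1))
      (ρ := r + ε * (1 - (1/2) ^ n)) (ε := ε * (1/2) ^ (n+1))
      (by linarith) (by positivity) z2 (by linarith [y2 (n+1)]) hconv hGC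
    have ed : Z * g + Y (n+1) * (1 - g) - Z = (Y (n+1) - Z) * (1 - g) := by noncomm_ring
    refine ⟨Z * g + Y (n+1) * (1 - g), ⟨?_, ?_, ?_⟩, ?_, ?_⟩
    · exact alg_add (alg_mul z1 g1) (alg_mul (y1 _) (alg_sub alg_one g1))
    · refine g5.le.trans (le_of_eq ?_)
      rw [pow_succ]; ring
    · have : Z * g + Y (n+1) * (1 - g) - Y (n+1) = (Z - Y (n+1)) * g := by noncomm_ring
      rw [this]; exact cpt_mul_left _ g2
    · intro k hk
      rw [ed, cor_mul (alg_sub alg_one g1) (hl k).2.1]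
      have hN := norm_proj_le (isStarProj (𝒩 := 𝒩) (hl k).2.1)
      refine (norm_mul_le _ _).trans ?_
      calc _ ≤ ((1:ℝ)/2) ^ n * 1 := by gcongr; exact g3 k hk
        _ = _ := mul_one _
    · intro i hi
      rw [ed]
      change ‖(Y (n+1) - Z) ((1 - g) (d i))‖ ≤ _
      refine (ContinuousLinearMap.le_opNorm _ _).trans ?_
      gcongr
      · refine (norm_sub_le _ _).trans ?_
        have := mul_pos hε (hpos n)
        linarith [y2 (n+1)]
      · exact g4 i hi
  choose! f f1 f2 f3 using hstep
  let Z : ℕ → H →L[ℂ] H := fun n => Nat.rec (Y 0) (fun n z => f n z) n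
  have hZs : ∀ n, Z (n+1) = f n (Z n) := fun n => rfl
  have hInv : ∀ n, Inv n (Z n) := by
    intro n
    induction n with
    | zero =>
      refine ⟨y1 0, ?_, ?_⟩
      · change ‖Y 0‖ ≤ _
        simpa using (y2 0).le
      · change IsCompactOperator ⇑(Y 0 - Y 0)
        rw [sub_self]; exact cpt_zero
    | succ n ih => rw [hZs]; exact f1 n _ ih
  have hZn : ∀ n, ‖Z n‖ ≤ r + ε := fun n => by
    have := (hInv n).2.1
    have := mul_pos hε (hpos n)
    linarith
  have hsumm : Summable (fun n : ℕ => ((1:ℝ)/2) ^ n) := summable_geometric_two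
  have hcor : ∀ k, CauchySeq (fun n => 𝒩.cor (Z n) (p k).1 (p k).2) := by
    intro k
    rw [← cauchySeq_shift k]
    refine cauchySeq_of_dist_le_of_summable (fun n => ((1:ℝ)/2) ^ n) ?_ hsumm
    intro n
    rw [dist_comm, dist_eq_norm, Nat.succ_eq_add_one,
      show n + 1 + k = (n + k) + 1 by ring, ← cor_sub]
    refine (f2 (n+k) _ (hInv _) k (by omega)).trans ?_
    exact pow_le_pow_of_le_one (by norm_num) (by norm_num) (by omega)
  have hdc : ∀ i, CauchySeq (fun n => Z n (d i)) := by
    intro i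
    rw [← cauchySeq_shift i]
    refine cauchySeq_of_dist_le_of_summable (fun n => (2 * r + ε) * ((1:ℝ)/2) ^ n) ?_
      (hsumm.mul_left _)
    intro n
    rw [dist_comm, dist_eq_norm, Nat.succ_eq_add_one,
      show n + 1 + i = (n + i) + 1 by ring]
    refine (f3 (n+i) _ (hInv _) i (by omega)).trans ?_
    gcongr ?_ * ?_
    exact pow_le_pow_of_le_one (by norm_num) (by norm_num) (by omega)
  have hxc : ∀ x, CauchySeq (fun n => Z n x) := by
    intro x
    rw [Metric.cauchySeq_iff']
    intro η hη
    obtain ⟨k, hk⟩ := hdd.exists_dist_lt x (ε := η / (4 * (r + ε))) (by positivity)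
    obtain ⟨n0, hn0⟩ := Metric.cauchySeq_iff'.1 (hdc k) (η / 2) (by positivity)
    refine ⟨n0, fun n hn => ?_⟩
    have h1 := hn0 n hn
    rw [dist_eq_norm] at h1 hk ⊢
    have e : Z n x - Z n0 x = (Z n (d k) - Z n0 (d k)) + Z n (x - d k) - Z n0 (x - d k) := by
      simp only [map_sub]; abel
    have h2 : ∀ n, ‖Z n (x - d k)‖ ≤ η / 4 := fun n => by
      refine (ContinuousLinearMap.le_opNorm _ _).trans ?_
      calc _ ≤ (r + ε) * (η / (4 * (r + ε))) := by gcongr; exact hZn n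
        _ = _ := by field_simp
    rw [e]
    have := norm_sub_le ((Z n (d k) - Z n0 (d k)) + Z n (x - d k)) (Z n0 (x - d k))
    have := norm_add_le (Z n (d k) - Z n0 (d k)) (Z n (x - d k))
    linarith [h2 n, h2 n0]
  choose zl hzl using fun x => cauchySeq_tendsto_of_complete (hxc x)
  let W : H →L[ℂ] H := LinearMap.mkContinuous
    { toFun := zl
      map_add' := fun x y => tendsto_nhds_unique (hzl (x+y))
        (((hzl x).add (hzl y)).congr fun n => (map_add _ _ _).symm)
      map_smul' := fun c x => tendsto_nhds_unique (hzl (c • x))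
        (((hzl x).const_smul c).congr fun n => (map_smul _ _ _).symm) } (r + ε)
    (fun x => le_of_tendsto (hzl x).norm (Eventually.of_forall fun n =>
      (ContinuousLinearMap.le_opNorm _ _).trans (by gcongr; exact hZn n)))
  have hW : ∀ x, Tendsto (fun n => Z n x) atTop (𝓝 (W x)) := hzl
  refine ⟨W, alg_of_strong (fun n => (hInv n).1) hW,
    LinearMap.mkContinuous_norm_le _ (by positivity) _, fun k => ?_⟩
  obtain ⟨L, hL⟩ := cauchySeq_tendsto_of_complete (hcor k)
  have hLW : L = 𝒩.cor W (p k).1 (p k).2 := by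
    ext x
    have a1 : Tendsto (fun n => 𝒩.cor (Z n) (p k).1 (p k).2 x) atTop (𝓝 (L x)) :=
      ((ContinuousLinearMap.apply ℂ H x).continuous.tendsto L).comp hL
    have a2 : Tendsto (fun n => 𝒩.cor (Z n) (p k).1 (p k).2 x) atTop
        (𝓝 (𝒩.cor W (p k).1 (p k).2 x)) :=
      ((1 - 𝒩.N (p k).1).continuous.tendsto _).comp (hW (𝒩.N (p k).2 x))
    exact tendsto_nhds_unique a1 a2
  have h1 : Tendsto (fun n => 𝒩.cor (X - Z n) (p k).1 (p k).2) atTop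
      (𝓝 (𝒩.cor (X - W) (p k).1 (p k).2)) := by
    simp only [cor_sub]
    rw [← hLW]
    exact tendsto_const_nhds.sub hL
  refine cpt_of_tendsto h1 ?_
  filter_upwards [eventually_ge_atTop k] with n hn
  have e : 𝒩.cor (X - Z n) (p k).1 (p k).2 = 𝒩.cor (X - Y n) (p k).1 (p k).2
      - 𝒩.cor (Z n - Y n) (p k).1 (p k).2 := by simp only [cor_sub]; abel
  rw [e]
  exact cpt_sub (y3 n k hn) (cpt_mul_right _ (cpt_mul_left _ (hInv n).2.2))

end ContinuousNest

section Comb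

/-- A downward closed relation describing subintervals of `[0,1]`. -/
structure DownRel (D : ℝ → ℝ → Prop) : Prop where
  bd : ∀ {s t}, D s t → 0 ≤ s ∧ s ≤ t ∧ t ≤ 1
  down : ∀ {s t s' t'}, D s t → s ≤ s' → s' ≤ t' → t' ≤ t → D s' t'

noncomputable def cg (D : ℝ → ℝ → Prop) (x : ℝ) : ℝ := sSup {t | t = x ∨ D x t}
noncomputable def ch (D : ℝ → ℝ → Prop) (x : ℝ) : ℝ := sInf {s | D s x}
def cr (D : ℝ → ℝ → Prop) (x y : ℝ) : Prop := ∃ n : ℕ, x ≤ (cg D)^[n] y ∧ y ≤ (cg D)^[n] x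
noncomputable def cb (D : ℝ → ℝ → Prop) (x : ℝ) : ℝ :=
  Classical.epsilon (fun b => (∃ q : ℚ, (q:ℝ) = b) ∧ cr D x b)
noncomputable def cn1 (D : ℝ → ℝ → Prop) (x : ℝ) : ℕ := sInf {n | x ≤ (cg D)^[n] (cb D x)}
noncomputable def cn2 (D : ℝ → ℝ → Prop) (x : ℝ) : ℕ := sInf {n | cb D x ≤ (cg D)^[n] x}
noncomputable def clab (D : ℝ → ℝ → Prop) (x : ℝ) : ℝ × ℕ × ℕ × Prop :=
  (cb D x, cn1 D x, cn2 D x, cr D x (cb D x))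
noncomputable def ccol (l : ℝ × ℕ × ℕ × Prop) : ℕ := if l.2.1 = 0 then l.2.2.1 else l.2.1 + 1
def cset (D : ℝ → ℝ → Prop) (x : ℝ) : Set ℝ := {y | clab D y ≠ clab D x} ∪ {0, 1}
noncomputable def csig (D : ℝ → ℝ → Prop) (x : ℝ) : ℝ :=
  (-1) ^ (ccol (clab D x)) * Metric.infDist x (cset D x)

variable {D : ℝ → ℝ → Prop}

theorem cg_bdd (hD : DownRel D) (x : ℝ) : BddAbove {t | t = x ∨ D x t} := by
  refine ⟨max x 1, ?_⟩
  rintro t (rfl | h)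
  · exact le_max_left _ _
  · exact (hD.bd h).2.2.trans (le_max_right _ _)

theorem le_cg (hD : DownRel D) (x : ℝ) : x ≤ cg D x := le_csSup (cg_bdd hD x) (Or.inl rfl)

theorem le_cg_of (hD : DownRel D) {s t : ℝ} (h : D s t) : t ≤ cg D s :=
  le_csSup (cg_bdd hD s) (Or.inr h)

theorem D_of_lt_cg (hD : DownRel D) {s t : ℝ} (hst : s ≤ t) (h : t < cg D s) : D s t := by
  obtain ⟨u, hu, hu2⟩ := exists_lt_of_lt_csSup (⟨s, Or.inl rfl⟩ : {t | t = s ∨ D s t}.Nonempty) h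
  rcases hu with rfl | hu
  · exact absurd hu2 (not_lt.2 hst)
  · exact hD.down hu le_rfl hst hu2.le

theorem cg_mono (hD : DownRel D) : Monotone (cg D) := by
  intro x y hxy
  refine csSup_le ⟨x, Or.inl rfl⟩ ?_
  rintro t (rfl | h)
  · exact hxy.trans (le_cg hD y)
  · rcases le_total y t with h' | h'
    · exact le_cg_of hD (hD.down h hxy h' le_rfl)
    · exact h'.trans (le_cg hD y)

theorem cgi_mono (hD : DownRel D) (n : ℕ) : Monotone ((cg D)^[n]) := (cg_mono hD).iterate n

theorem cgi_le (hD : DownRel D) (x : ℝ) {n m : ℕ} (h : n ≤ m) : (cg D)^[n] x ≤ (cg D)^[m] x :=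
  Monotone.monotone_iterate_of_le_map (cg_mono hD) (le_cg hD x) h

theorem le_cgi (hD : DownRel D) (x : ℝ) (m : ℕ) : x ≤ (cg D)^[m] x := cgi_le hD x (Nat.zero_le m)

theorem cr_symm {x y : ℝ} (h : cr D x y) : cr D y x := by
  obtain ⟨n, h1, h2⟩ := h; exact ⟨n, h2, h1⟩

theorem cr_trans (hD : DownRel D) {x y z : ℝ} (h : cr D x y) (h' : cr D y z) : cr D x z := by
  obtain ⟨n, h1, h2⟩ := h; obtain ⟨m, h3, h4⟩ := h'
  refine ⟨n + m, ?_, ?_⟩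
  · rw [Function.iterate_add_apply]
    exact h1.trans (cgi_mono hD n h3)
  · rw [add_comm, Function.iterate_add_apply]
    exact h4.trans (cgi_mono hD m h2)

theorem cr_between (hD : DownRel D) {x y z : ℝ} (h : cr D x z) (h1 : x ≤ y) (h2 : y ≤ z) :
    cr D x y := by
  obtain ⟨n, h3, h4⟩ := h
  exact ⟨n, h1.trans (le_cgi hD y n), h2.trans h4⟩

theorem cb_congr (hD : DownRel D) {x y : ℝ} (h : cr D x y) : cb D x = cb D y := by
  unfold cb
  congr 1
  funext b
  refine propext (and_congr_right fun _ => ⟨fun h' => cr_trans hD (cr_symm h) h',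
    fun h' => cr_trans hD h h'⟩)

theorem cb_spec {x : ℝ} (q : ℚ) (h : cr D x q) :
    (∃ q : ℚ, (q:ℝ) = cb D x) ∧ cr D x (cb D x) :=
  Classical.epsilon_spec (p := fun b => (∃ q : ℚ, (q:ℝ) = b) ∧ cr D x b) ⟨q, ⟨q, rfl⟩, h⟩

theorem cn1_mono (hD : DownRel D) {x y : ℝ} (hxy : x ≤ y) (hb : cb D x = cb D y)
    (h : cr D y (cb D y)) : cn1 D x ≤ cn1 D y := by
  have hne : {n | y ≤ (cg D)^[n] (cb D y)}.Nonempty := by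
    obtain ⟨n, h1, _⟩ := h; exact ⟨n, h1⟩
  have := Nat.sInf_mem hne
  refine Nat.sInf_le ?_
  change x ≤ _
  rw [hb]
  exact hxy.trans this

theorem cn2_anti (hD : DownRel D) {x y : ℝ} (hxy : x ≤ y) (hb : cb D x = cb D y)
    (h : cr D x (cb D x)) : cn2 D y ≤ cn2 D x := by
  have hne : {n | cb D x ≤ (cg D)^[n] x}.Nonempty := by
    obtain ⟨n, _, h1⟩ := h; exact ⟨n, h1⟩
  have := Nat.sInf_mem hne
  refine Nat.sInf_le ?_
  change cb D y ≤ _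
  rw [← hb]
  exact this.trans (cgi_mono hD _ hxy)

theorem clab_between (hD : DownRel D) {x y z : ℝ} (hx : cr D x (cb D x))
    (hxz : clab D x = clab D z) (h1 : x ≤ y) (h2 : y ≤ z) : clab D y = clab D x := by
  simp only [clab, Prod.mk.injEq] at hxz
  obtain ⟨e1, e2, e3, e4⟩ := hxz
  have hz : cr D z (cb D z) := e4 ▸ hx
  have hxz : cr D x z := cr_trans hD hx (cr_symm (e1 ▸ hz))
  have hxy := cr_between hD hxz h1 h2
  have b1 := cb_congr hD hxy
  have b2 := cb_congr hD hxz
  have hy : cr D y (cb D y) := b1 ▸ cr_trans hD (cr_symm hxy) hx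
  have a1 := cn1_mono hD h1 b1 hy
  have a2 := cn1_mono hD h2 (b1.symm.trans b2) hz
  have a3 := cn2_anti hD h1 b1 hx
  have a4 := cn2_anti hD h2 (b1.symm.trans b2) hy
  simp only [clab, Prod.mk.injEq]
  exact ⟨b1.symm, by omega, by omega, propext ⟨fun _ => hx, fun _ => hy⟩⟩

theorem csig_abs (x : ℝ) : |csig D x| = Metric.infDist x (cset D x) := by
  rw [csig, abs_mul, abs_pow, abs_neg, abs_one, one_pow, one_mul, abs_of_nonneg Metric.infDist_nonneg]

theorem clab_of_lt {x y : ℝ} (h : |y - x| < |csig D x|) : clab D y = clab D x := by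
  by_contra hne
  rw [csig_abs] at h
  have := Metric.infDist_le_dist_of_mem (x := x) (show y ∈ cset D x from Or.inl hne)
  rw [dist_comm, Real.dist_eq] at this
  linarith

theorem csig_lip (x y : ℝ) (hxy : x < y) : |csig D x - csig D y| ≤ y - x := by
  by_cases hl : clab D x = clab D y
  · have hs : cset D x = cset D y := by unfold cset; rw [hl]
    have e : csig D x - csig D y = (-1) ^ (ccol (clab D x)) *
        (Metric.infDist x (cset D x) - Metric.infDist y (cset D x)) := by
      unfold csig; rw [← hl, ← hs]; ring
    rw [e, abs_mul, abs_pow, abs_neg, abs_one, one_pow, one_mul]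
    have h1 := Metric.infDist_le_infDist_add_dist (s := cset D x) (x := x) (y := y)
    have h2 := Metric.infDist_le_infDist_add_dist (s := cset D x) (x := y) (y := x)
    rw [Real.dist_eq, abs_sub_comm, abs_of_pos (by linarith)] at h1
    rw [Real.dist_eq, abs_of_pos (by linarith)] at h2
    rw [abs_le]; constructor <;> linarith
  · have h1 : |csig D x| ≤ y - x := by
      by_contra! h
      exact hl (clab_of_lt (x := x) (y := y) (by rwa [abs_of_pos (by linarith)])).symm
    have h2 : |csig D y| ≤ y - x := by
      by_contra! h
      exact hl (clab_of_lt (x := y) (y := x) (by rwa [abs_sub_comm, abs_of_pos (by linarith)]))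
    have h3 : |csig D x| + |csig D y| ≤ y - x := by
      by_contra! h
      set z := ((x + |csig D x|) + (y - |csig D y|)) / 2 with hz
      apply hl
      rw [← clab_of_lt (x := x) (y := z) (by rw [abs_lt]; constructor <;> linarith),
        clab_of_lt (x := y) (y := z) (by rw [abs_lt]; constructor <;> linarith)]
    have := abs_sub (csig D x) (csig D y)
    linarith

theorem csig_zero : csig D 0 = 0 := by
  rw [← abs_eq_zero, csig_abs]
  exact Metric.infDist_zero_of_mem (Or.inr (by simp))

theorem csig_one : csig D 1 = 0 := by
  rw [← abs_eq_zero, csig_abs]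
  exact Metric.infDist_zero_of_mem (Or.inr (by simp))

/-- The countable set of special points. -/
def cC (D : ℝ → ℝ → Prop) : Set ℝ :=
  (⋃ q : ℚ, ⋃ n : ℕ, {(cg D)^[n] q}) ∪
  ⋃ q : ℚ, ⋃ a : ℕ, ⋃ b : ℕ, {x | IsLeast {y | clab D y = ((q:ℝ), a, b, True)} x} ∪
    {x | IsGreatest {y | clab D y = ((q:ℝ), a, b, True)} x}

theorem cC_countable : (cC D).Countable := by
  refine Countable.union (countable_iUnion fun q => countable_iUnion fun n => countable_singleton _)
    (countable_iUnion fun q => countable_iUnion fun a => countable_iUnion fun b => ?_)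
  refine Countable.union ?_ ?_
  · exact Set.Subsingleton.countable fun x hx y hy => hx.unique hy
  · exact Set.Subsingleton.countable fun x hx y hy => hx.unique hy

theorem cgi_mem_cC (q : ℚ) (n : ℕ) : (cg D)^[n] q ∈ cC D :=
  Or.inl (mem_iUnion.2 ⟨q, mem_iUnion.2 ⟨n, rfl⟩⟩)

theorem rat_mem_cC (q : ℚ) : (q:ℝ) ∈ cC D := cgi_mem_cC q 0

theorem csig_ne_zero (hD : DownRel D) {s : ℝ} (hs : s ∉ cC D) (q : ℚ) (hq : cr D s q) :
    csig D s ≠ 0 := by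
  intro h0
  rw [← abs_eq_zero, csig_abs] at h0
  obtain ⟨⟨b, hb⟩, hsb⟩ := cb_spec q hq
  have hlab : clab D s = ((b:ℝ), cn1 D s, cn2 D s, True) := by
    simp only [clab, Prod.mk.injEq]; refine ⟨hb.symm, trivial, trivial, eq_true hsb⟩
  set F := {y | clab D y = ((b:ℝ), cn1 D s, cn2 D s, True)} with hF
  have hsF : s ∈ F := hlab
  have hnl : ¬ IsLeast F s := fun h => hs (Or.inr (mem_iUnion.2 ⟨b, mem_iUnion.2 ⟨cn1 D s,
    mem_iUnion.2 ⟨cn2 D s, Or.inl h⟩⟩⟩))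
  have hng : ¬ IsGreatest F s := fun h => hs (Or.inr (mem_iUnion.2 ⟨b, mem_iUnion.2 ⟨cn1 D s,
    mem_iUnion.2 ⟨cn2 D s, Or.inr h⟩⟩⟩))
  obtain ⟨a, ha, has⟩ : ∃ a ∈ F, a < s := by
    by_contra! hc; exact hnl ⟨hsF, fun y hy => hc y hy⟩
  obtain ⟨c, hc, hsc⟩ : ∃ c ∈ F, s < c := by
    by_contra! hc; exact hng ⟨hsF, fun y hy => hc y hy⟩
  have hs0 : s ≠ 0 := by rintro rfl; exact hs (by simpa using rat_mem_cC (D := D) 0)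
  have hs1 : s ≠ 1 := by rintro rfl; exact hs (by simpa using rat_mem_cC (D := D) 1)
  have hcne : (cset D s).Nonempty := ⟨0, Or.inr (by simp)⟩
  have hcl : s ∈ closure (cset D s) := (Metric.mem_closure_iff_infDist_zero hcne).2 h0
  have hnh : Ioo a c ∩ ({0, 1} : Set ℝ)ᶜ ∈ 𝓝 s :=
    inter_mem (Ioo_mem_nhds has hsc)
      ((Set.Finite.isClosed (by simp)).isOpen_compl.mem_nhds (by simp [hs0, hs1]))
  obtain ⟨y, ⟨hy1, hy2⟩, hy3⟩ := mem_closure_iff_nhds.1 hcl _ hnh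
  rcases hy3 with hy3 | hy3
  · apply hy3
    have hca : cr D a (cb D a) := by
      have : clab D a = ((b:ℝ), cn1 D s, cn2 D s, True) := ha
      simp only [clab, Prod.mk.injEq] at this
      exact of_eq_true this.2.2.2
    rw [clab_between hD hca (Eq.trans ha hc.symm) hy1.1.le hy1.2.le, ha, hlab]
  · exact hy2 hy3

theorem ccol_clab (x : ℝ) :
    ccol (clab D x) = if cn1 D x = 0 then cn2 D x else cn1 D x + 1 := rfl

/-- The colour changes between `s` and `cg D s`. -/
theorem color_change (hD : DownRel D) {s t : ℝ} (hs : s ∉ cC D) (ht : t ∉ cC D) (hst : s < t)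
    (hg : cg D s = t) :
    ∃ k, (ccol (clab D s) = k ∧ ccol (clab D t) = k + 1) ∨
      (ccol (clab D t) = k ∧ ccol (clab D s) = k + 1) := by
  obtain ⟨q, hq1, hq2⟩ := exists_rat_btwn hst
  have hrt : cr D s t := ⟨1, hst.le.trans (le_cgi hD t 1), by simp [hg]⟩
  have hrq : cr D s q := cr_between hD hrt hq1.le hq2.le
  obtain ⟨⟨b, hb⟩, hsb⟩ := cb_spec q hrq
  have hbt : cb D t = b := by rw [← cb_congr hD hrt, hb]
  have hbs : cb D s = b := hb.symm
  rw [hbs] at hsb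
  have htb : cr D t b := cr_trans hD (cr_symm hrt) hsb
  have hsne : s ≠ b := by rintro rfl; exact hs (rat_mem_cC b)
  have htne : t ≠ b := by rintro rfl; exact ht (rat_mem_cC b)
  have e1 : cn1 D s = sInf {n | s ≤ (cg D)^[n] b} := by unfold cn1; rw [hbs]
  have e2 : cn2 D s = sInf {n | (b:ℝ) ≤ (cg D)^[n] s} := by unfold cn2; rw [hbs]
  have e3 : cn1 D t = sInf {n | t ≤ (cg D)^[n] b} := by unfold cn1; rw [hbt]
  have e4 : cn2 D t = sInf {n | (b:ℝ) ≤ (cg D)^[n] t} := by unfold cn2; rw [hbt]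
  have m1 : s ≤ (cg D)^[cn1 D s] b := by
    rw [e1]; exact Nat.sInf_mem (s := {n | s ≤ (cg D)^[n] b}) (by
      obtain ⟨n, h, _⟩ := hsb; exact ⟨n, h⟩)
  have m2 : (b:ℝ) ≤ (cg D)^[cn2 D s] s := by
    rw [e2]; exact Nat.sInf_mem (s := {n | (b:ℝ) ≤ (cg D)^[n] s}) (by
      obtain ⟨n, _, h⟩ := hsb; exact ⟨n, h⟩)
  have m3 : t ≤ (cg D)^[cn1 D t] b := by
    rw [e3]; exact Nat.sInf_mem (s := {n | t ≤ (cg D)^[n] b}) (by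
      obtain ⟨n, h, _⟩ := htb; exact ⟨n, h⟩)
  have m4 : (b:ℝ) ≤ (cg D)^[cn2 D t] t := by
    rw [e4]; exact Nat.sInf_mem (s := {n | (b:ℝ) ≤ (cg D)^[n] t}) (by
      obtain ⟨n, _, h⟩ := htb; exact ⟨n, h⟩)
  have l1 : ∀ n, s ≤ (cg D)^[n] b → cn1 D s ≤ n := fun n h => by rw [e1]; exact Nat.sInf_le h
  have l2 : ∀ n, (b:ℝ) ≤ (cg D)^[n] s → cn2 D s ≤ n := fun n h => by rw [e2]; exact Nat.sInf_le h
  have l3 : ∀ n, t ≤ (cg D)^[n] b → cn1 D t ≤ n := fun n h => by rw [e3]; exact Nat.sInf_le h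
  have l4 : ∀ n, (b:ℝ) ≤ (cg D)^[n] t → cn2 D t ≤ n := fun n h => by rw [e4]; exact Nat.sInf_le h
  rw [ccol_clab, ccol_clab]
  rcases lt_or_gt_of_ne hsne with h | h
  · have z1 : cn1 D s = 0 := Nat.le_zero.1 (l1 0 h.le)
    have p2 : cn2 D s ≠ 0 := by
      intro h0; rw [h0] at m2; exact absurd m2 (not_le.2 h)
    rcases lt_or_gt_of_ne htne with h' | h'
    · have z3 : cn1 D t = 0 := Nat.le_zero.1 (l3 0 h'.le)
      refine ⟨cn2 D t, Or.inr ⟨by simp [z3], ?_⟩⟩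
      simp only [z1, if_true]
      apply le_antisymm
      · apply l2
        rw [Function.iterate_succ_apply, hg]; exact m4
      · obtain ⟨j, hj⟩ := Nat.exists_eq_succ_of_ne_zero p2
        rw [hj, Function.iterate_succ_apply, hg] at m2
        have := l4 j m2
        omega
    · have p3 : cn1 D t ≠ 0 := by
        intro h0; rw [h0] at m3; exact absurd m3 (not_le.2 h')
      have u2 : cn2 D s ≤ 1 := l2 1 (by rw [Function.iterate_one, hg]; exact h'.le)
      have u3 : cn1 D t ≤ 1 := l3 1 (by rw [Function.iterate_one, ← hg]; exact cg_mono hD h.le)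
      refine ⟨1, Or.inl ⟨?_, ?_⟩⟩
      · simp only [z1, if_true]; omega
      · rw [if_neg p3]; omega
  · have p1 : cn1 D s ≠ 0 := by
      intro h0; rw [h0] at m1; exact absurd m1 (not_le.2 h)
    have p3 : cn1 D t ≠ 0 := by
      intro h0; rw [h0] at m3; exact absurd m3 (not_le.2 (h.trans hst))
    refine ⟨cn1 D s + 1, Or.inl ⟨by rw [if_neg p1], ?_⟩⟩
    rw [if_neg p3]
    congr 1
    apply le_antisymm
    · apply l3
      rw [Function.iterate_succ_apply', ← hg]
      exact cg_mono hD m1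
    · by_contra! hlt
      obtain ⟨j, hj⟩ := Nat.exists_eq_succ_of_ne_zero p3
      have hjs : (cg D)^[j] b < s := by
        by_contra! hh
        have := l1 j hh
        omega
      have h5 : (cg D)^[j+1] b ≤ t := by
        rw [Function.iterate_succ_apply', ← hg]; exact cg_mono hD hjs.le
      rw [hj] at m3
      exact ht (le_antisymm m3 h5 ▸ cgi_mem_cC b (j+1))

theorem comb_lemma (hD : DownRel D) : ∃ φ₁ φ₂ : ℝ → ℝ,
    (StrictMono φ₁ ∧ Continuous φ₁ ∧ φ₁ 0 = 0 ∧ φ₁ 1 = 1) ∧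
    (StrictMono φ₂ ∧ Continuous φ₂ ∧ φ₂ 0 = 0 ∧ φ₂ 1 = 1) ∧
    ∃ C : Set ℝ, C.Countable ∧ ∀ s t, s < t → D s t → D (φ₁ s) (φ₁ t) → D (φ₂ s) (φ₂ t) →
      ∃ s₀ ∈ C, ∃ t₀ ∈ C, D s₀ t₀ ∧ s₀ ≤ s ∧ t ≤ t₀ := by
  have hcont : Continuous (csig D) := by
    refine LipschitzWith.continuous (K := 1) (LipschitzWith.of_dist_le_mul fun x y => ?_)
    rw [Real.dist_eq, Real.dist_eq, NNReal.coe_one, one_mul]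
    rcases lt_trichotomy x y with h | h | h
    · rw [abs_sub_comm x y, abs_of_pos (by linarith : 0 < y - x)]; exact csig_lip x y h
    · simp [h]
    · rw [abs_sub_comm (csig D x), abs_of_pos (by linarith : 0 < x - y)]; exact csig_lip y x h
  refine ⟨fun x => x + csig D x / 2, fun x => x - csig D x / 2, ⟨?_, by fun_prop, ?_, ?_⟩,
    ⟨?_, by fun_prop, ?_, ?_⟩, cC D ∪ (cg D '' cC D ∪ ch D '' cC D),
    cC_countable.union ((cC_countable.image _).union (cC_countable.image _)), ?_⟩
  · intro x y h
    have := abs_le.1 (csig_lip (D := D) x y h)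
    simp only; linarith
  · simp [csig_zero]
  · simp [csig_one]
  · intro x y h
    have := abs_le.1 (csig_lip (D := D) x y h)
    simp only; linarith
  · simp [csig_zero]
  · simp [csig_one]
  intro s t hst hDst hp hm
  -- it suffices to find a dominating interval with one special endpoint
  have suff : ∀ s₀ t₀, D s₀ t₀ → s₀ ≤ s → t ≤ t₀ → (s₀ ∈ cC D ∨ t₀ ∈ cC D) →
      ∃ s₀ ∈ cC D ∪ (cg D '' cC D ∪ ch D '' cC D), ∃ t₀ ∈ cC D ∪ (cg D '' cC D ∪ ch D '' cC D),
        D s₀ t₀ ∧ s₀ ≤ s ∧ t ≤ t₀ := by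
    intro s₀ t₀ h0 h1 h2 h3
    rcases h3 with h3 | h3
    · rcases (le_cg_of hD h0).eq_or_lt with h4 | h4
      · exact ⟨s₀, Or.inl h3, t₀, Or.inr (Or.inl ⟨s₀, h3, h4.symm⟩), h0, h1, h2⟩
      · obtain ⟨u, hu1, hu2⟩ := exists_rat_btwn h4
        exact ⟨s₀, Or.inl h3, u, Or.inl (rat_mem_cC u),
          D_of_lt_cg hD ((hD.bd h0).2.1.trans hu1.le) hu2, h1, h2.trans hu1.le⟩
    · have hbb : BddBelow {s | D s t₀} := ⟨0, fun x hx => (hD.bd hx).1⟩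
      have hle : ch D t₀ ≤ s₀ := csInf_le hbb h0
      rcases hle.eq_or_lt with h4 | h4
      · exact ⟨s₀, Or.inr (Or.inr ⟨t₀, h3, h4⟩), t₀, Or.inl h3, h0, h1, h2⟩
      · obtain ⟨u, hu1, hu2⟩ := exists_rat_btwn h4
        obtain ⟨v, hv1, hv2⟩ := exists_lt_of_csInf_lt ⟨s₀, h0⟩ hu1
        exact ⟨u, Or.inl (rat_mem_cC u), t₀, Or.inl h3,
          hD.down hv1 hv2.le (hu2.le.trans (hD.bd h0).2.1) le_rfl, hu2.le.trans h1, h2⟩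
  by_contra hcon
  have Hc : ∀ s₀ t₀, D s₀ t₀ → s₀ ≤ s → t ≤ t₀ → s₀ ∉ cC D ∧ t₀ ∉ cC D := by
    intro s₀ t₀ h0 h1 h2
    constructor
    · intro h; exact hcon (suff s₀ t₀ h0 h1 h2 (Or.inl h))
    · intro h; exact hcon (suff s₀ t₀ h0 h1 h2 (Or.inr h))
  obtain ⟨hsC, htC⟩ := Hc s t hDst le_rfl le_rfl
  have hg : cg D s = t := by
    apply le_antisymm _ (le_cg_of hD hDst)
    by_contra! h
    obtain ⟨u, hu1, hu2⟩ := exists_rat_btwn h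
    exact (Hc s u (D_of_lt_cg hD (hst.le.trans hu1.le) hu2) le_rfl hu1.le).2 (rat_mem_cC u)
  have enlarge : ∀ s' t', D s' t' → s' < s → t ≤ t' → False := by
    intro s' t' h0 h1 h2
    obtain ⟨u, hu1, hu2⟩ := exists_rat_btwn h1
    exact (Hc u t' (hD.down h0 hu1.le ((hu2.trans hst).le.trans h2) le_rfl) hu2.le h2).1
      (rat_mem_cC u)
  obtain ⟨q, hq1, hq2⟩ := exists_rat_btwn hst
  have hrt : cr D s t := ⟨1, hst.le.trans (le_cgi hD t 1), by simp [hg]⟩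
  have hne := csig_ne_zero hD hsC q (cr_between hD hrt hq1.le hq2.le)
  have hprod : csig D s * csig D t ≤ 0 := by
    have hi1 := Metric.infDist_nonneg (x := s) (s := cset D s)
    have hi2 := Metric.infDist_nonneg (x := t) (s := cset D t)
    have hsq : ∀ k : ℕ, ((-1:ℝ)) ^ k * (-1) ^ (k+1) = -1 := fun k => by
      rw [← pow_add, show k + (k+1) = 2 * k + 1 by ring, pow_succ, pow_mul]; simp
    unfold csig
    obtain ⟨k, ⟨h1, h2⟩ | ⟨h1, h2⟩⟩ := color_change hD hsC htC hst hg
    · rw [h1, h2]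
      nlinarith [hsq k, mul_nonneg hi1 hi2]
    · rw [h1, h2]
      nlinarith [hsq k, mul_nonneg hi1 hi2]
  rcases lt_or_gt_of_ne hne with h | h
  · have : 0 ≤ csig D t := by nlinarith
    exact enlarge _ _ hp (by simp only; linarith) (by simp only; linarith)
  · have : csig D t ≤ 0 := by nlinarith
    exact enlarge _ _ hm (by simp only; linarith) (by simp only; linarith)

end Comb

namespace ContinuousNest

theorem N_injOn (𝒩 : ContinuousNest H) : InjOn 𝒩.N (Icc (0:ℝ) 1) := by
  intro x hx y hy h
  rcases lt_trichotomy x y with h' | h' | h'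
  · have := 𝒩.range_lt x y hx hy h'
    rw [h] at this; exact absurd this (lt_irrefl _)
  · exact h'
  · have := 𝒩.range_lt y x hy hx h'
    rw [h] at this; exact absurd this (lt_irrefl _)

theorem exists_auto (𝒩 : ContinuousNest H) {φ : ℝ → ℝ} (h1 : StrictMono φ) (h2 : Continuous φ)
    (h3 : φ 0 = 0) (h4 : φ 1 = 1) :
    (∀ u ∈ Icc (0:ℝ) 1, ∃ x ∈ Icc (0:ℝ) 1, φ x = u) ∧
    ∃ θ, 𝒩.IsAuto θ ∧ ∀ x ∈ Icc (0:ℝ) 1, θ (𝒩.N (φ x)) = 𝒩.N x := by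
  have hsurj : ∀ u ∈ Icc (0:ℝ) 1, ∃ x ∈ Icc (0:ℝ) 1, φ x = u := by
    intro u hu
    have := intermediate_value_Icc (zero_le_one' ℝ) h2.continuousOn
    rw [h3, h4] at this
    exact this hu
  have hmaps : ∀ x ∈ Icc (0:ℝ) 1, φ x ∈ Icc (0:ℝ) 1 := fun x hx =>
    ⟨h3 ▸ h1.monotone hx.1, h4 ▸ h1.monotone hx.2⟩
  refine ⟨hsurj, ?_⟩
  let θ : (H →L[ℂ] H) → H →L[ℂ] H := fun E =>
    𝒩.N (Function.invFun φ (Function.invFunOn 𝒩.N (Icc (0:ℝ) 1) E))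
  have hθ : ∀ x ∈ Icc (0:ℝ) 1, θ (𝒩.N (φ x)) = 𝒩.N x := by
    intro x hx
    change 𝒩.N (Function.invFun φ (Function.invFunOn 𝒩.N (Icc (0:ℝ) 1) (𝒩.N (φ x)))) = _
    have e1 : Function.invFunOn 𝒩.N (Icc (0:ℝ) 1) (𝒩.N (φ x)) = φ x :=
      𝒩.N_injOn (Function.invFunOn_mem ⟨φ x, hmaps x hx, rfl⟩) (hmaps x hx)
        (Function.invFunOn_eq ⟨φ x, hmaps x hx, rfl⟩)
    rw [e1, Function.leftInverse_invFun h1.injective x]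
  refine ⟨θ, ⟨⟨?_, ?_, ?_⟩, ?_⟩, hθ⟩
  · rintro _ ⟨u, hu, rfl⟩
    obtain ⟨x, hx, rfl⟩ := hsurj u hu
    rw [hθ x hx]; exact ⟨x, hx, rfl⟩
  · rintro _ ⟨u, hu, rfl⟩ _ ⟨v, hv, rfl⟩ h
    obtain ⟨x, hx, rfl⟩ := hsurj u hu
    obtain ⟨y, hy, rfl⟩ := hsurj v hv
    rw [hθ x hx, hθ y hy] at h
    rw [𝒩.N_injOn hx hy h]
  · rintro _ ⟨x, hx, rfl⟩
    exact ⟨𝒩.N (φ x), ⟨φ x, hmaps x hx, rfl⟩, hθ x hx⟩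
  · intro s t hs ht hst
    obtain ⟨x, hx, rfl⟩ := hsurj s hs
    obtain ⟨y, hy, rfl⟩ := hsurj t ht
    rw [hθ x hx, hθ y hy]
    exact ContinuousLinearMap.IsPositive.of_isStarProjection
      (isStarProj_sub hx hy (h1.le_iff_le.1 hst))

theorem exists_approx [TopologicalSpace.SeparableSpace H] {𝒩 : ContinuousNest H}
    {O : Set (Set (H →L[ℂ] H))} (hO : 𝒩.IsStableNet O) {X : H →L[ℂ] H} (hX : X ∈ 𝒩.alg)
    {P : Set (H →L[ℂ] H)} (hP : P ∈ O) {r ε : ℝ} (hr : 0 < r) (hε : 0 < ε)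
    (hPr : ∀ E ∈ P, essNorm (E * X * E) < r) :
    ∃ Y, ‖Y‖ ≤ r + ε ∧ X - Y ∈ 𝒩.kernel O := by
  obtain ⟨⟨hfam, hdir⟩, hstab⟩ := hO
  let D : ℝ → ℝ → Prop := fun s t =>
    ∃ a b, 0 ≤ a ∧ a ≤ s ∧ s ≤ t ∧ t ≤ b ∧ b ≤ 1 ∧ 𝒩.N b - 𝒩.N a ∈ P
  have hD : DownRel D := by
    constructor
    · rintro s t ⟨a, b, h1, h2, h3, h4, h5, _⟩
      exact ⟨by linarith, h3, by linarith⟩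
    · rintro s t s' t' ⟨a, b, h1, h2, h3, h4, h5, h6⟩ g1 g2 g3
      exact ⟨a, b, h1, by linarith, g2, by linarith, h5, h6⟩
  obtain ⟨φ₁, φ₂, ⟨a1, a2, a3, a4⟩, ⟨b1, b2, b3, b4⟩, C, hC, hdom⟩ := comb_lemma hD
  obtain ⟨sa, θ₁, ha, hθ₁⟩ := 𝒩.exists_auto a1 a2 a3 a4
  obtain ⟨sb, θ₂, hb, hθ₂⟩ := 𝒩.exists_auto b1 b2 b3 b4
  -- the countable family of pairs
  let S : Set (ℝ × ℝ) := insert ((0:ℝ), (0:ℝ)) {p | p ∈ C ×ˢ C ∧ D p.1 p.2}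
  have hS : S.Countable := ((hC.prod hC).mono fun p hp => hp.1).insert _
  obtain ⟨p, hp⟩ := hS.exists_eq_range ⟨_, mem_insert _ _⟩
  have h0 : (0:ℝ) ∈ Icc (0:ℝ) 1 := by simp
  have hpk : ∀ k, (p k).1 ∈ Icc (0:ℝ) 1 ∧ (p k).2 ∈ Icc (0:ℝ) 1 ∧
      essNorm (𝒩.cor X (p k).1 (p k).2) < r := by
    intro k
    have hk : p k ∈ S := by rw [hp]; exact mem_range_self k
    rcases hk with hk | ⟨_, a, b, h1, h2, h3, h4, h5, h6⟩
    · rw [hk]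
      refine ⟨h0, h0, ?_⟩
      have : 𝒩.cor X 0 0 = 0 := by unfold cor; rw [𝒩.N_zero, mul_zero]
      simp only [this]
      rw [essNorm_of_cpt cpt_zero]; exact hr
    · have ia : a ∈ Icc (0:ℝ) 1 := ⟨by linarith, by linarith⟩
      have ib : b ∈ Icc (0:ℝ) 1 := ⟨by linarith, by linarith⟩
      have is : (p k).1 ∈ Icc (0:ℝ) 1 := ⟨by linarith, by linarith⟩
      have it : (p k).2 ∈ Icc (0:ℝ) 1 := ⟨by linarith, by linarith⟩
      refine ⟨is, it, ?_⟩
      rw [cor_mono is it ia ib h2 h4]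
      refine lt_of_le_of_lt (essNorm_mul_mul_le _ _ _ (norm_proj_le (isStarProj_compl is))
        (norm_proj_le (isStarProj it))) ?_
      rw [← compress_eq_cor hX ia ib (by linarith)]
      exact hPr _ h6
  obtain ⟨Y, hY, hYn, hYc⟩ := sigma_step hX hr hε p hpk
  refine ⟨Y, hYn, alg_sub hX hY, fun η hη => ?_⟩
  obtain ⟨R₁, hR₁, r1, r2⟩ := hdir _ (hstab θ₁ ha P hP) _ (hstab θ₂ hb P hP)
  obtain ⟨R, hR, r3, r4⟩ := hdir P hP R₁ hR₁
  refine ⟨R, hR, fun E hE => ?_⟩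
  obtain ⟨s, t, g1, g2, g3, rfl⟩ := hfam R hR E hE
  rcases g2.eq_or_lt with rfl | hst
  · rw [sub_self, zero_mul, mul_zero, essNorm_of_cpt cpt_zero]; exact hη
  have is : s ∈ Icc (0:ℝ) 1 := ⟨by linarith, by linarith⟩
  have it : t ∈ Icc (0:ℝ) 1 := ⟨by linarith, by linarith⟩
  have d0 : D s t := by
    obtain ⟨F, hF, hpos⟩ := r3 _ hE
    obtain ⟨a, b, h1, h2, h3, rfl⟩ := hfam P hP F hF
    have := interval_le is it ⟨by linarith, by linarith⟩ ⟨by linarith, by linarith⟩ hst h2 hpos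
    exact ⟨a, b, h1, this.1, g2, this.2, h3, hF⟩
  obtain ⟨E', hE', hpos'⟩ := r4 _ hE
  have dφ : ∀ (φ : ℝ → ℝ) (θ : (H →L[ℂ] H) → H →L[ℂ] H), StrictMono φ →
      (∀ u ∈ Icc (0:ℝ) 1, ∃ x ∈ Icc (0:ℝ) 1, φ x = u) →
      (∀ x ∈ Icc (0:ℝ) 1, θ (𝒩.N (φ x)) = 𝒩.N x) → OpRefines R₁ (𝒩.autoImage θ P) →
      D (φ s) (φ t) := by
    intro φ θ hφ hsurj hθ href
    obtain ⟨F, ⟨a, b, h1, h2, h3, h4, rfl⟩, hpos⟩ := href _ hE'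
    obtain ⟨x, hx, rfl⟩ := hsurj a ⟨by linarith, by linarith⟩
    obtain ⟨y, hy, rfl⟩ := hsurj b ⟨by linarith, by linarith⟩
    rw [hθ x hx, hθ y hy] at hpos
    have hpp := hpos.add hpos'
    rw [sub_add_sub_cancel] at hpp
    have := interval_le is it hx hy hst (hφ.le_iff_le.1 h2) hpp
    exact ⟨φ x, φ y, h1, hφ.monotone this.1, hφ.monotone g2, hφ.monotone this.2, h3, h4⟩
  obtain ⟨s₀, hs₀, t₀, ht₀, hD₀, q1, q2⟩ := hdom s t hst d0 (dφ φ₁ θ₁ a1 sa hθ₁ r1)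
    (dφ φ₂ θ₂ b1 sb hθ₂ r2)
  have hmem : (s₀, t₀) ∈ S := Or.inr ⟨⟨hs₀, ht₀⟩, hD₀⟩
  rw [hp] at hmem
  obtain ⟨k, hk⟩ := hmem
  have hcp := hYc k
  rw [hk] at hcp
  have hkI := hpk k
  rw [hk] at hkI
  rw [compress_eq_cor (alg_sub hX hY) is it g2, cor_mono is it hkI.1 hkI.2.1 q1 q2,
    essNorm_of_cpt (cpt_mul_right _ (cpt_mul_left _ hcp))]
  exact hη

end ContinuousNest

/-- Quotient norm formula: the distance from `X ∈ Alg 𝒩` to the kernel of a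
stable net `O` equals the limit (= infimum, by antitonicity under refinement) over `P ∈ O`
of `sup_{E ∈ P} ‖EXE‖ₑ`. -/
theorem stmt2 {H : Type*} [NormedAddCommGroup H] [InnerProductSpace ℂ H] [CompleteSpace H]
    [TopologicalSpace.SeparableSpace H] (hH : ¬FiniteDimensional ℂ H)
    (𝒩 : ContinuousNest H) (O : Set (Set (H →L[ℂ] H))) (hO : 𝒩.IsStableNet O)
    (X : H →L[ℂ] H) (hX : X ∈ 𝒩.alg) :
    Metric.infDist X (𝒩.kernel O) =
      ⨅ P : O, ⨆ E : P.1, essNorm (E.1 * X * E.1) := by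
  rcases O.eq_empty_or_nonempty with rfl | hne
  · rw [Real.iInf_of_isEmpty]
    have : 𝒩.kernel ∅ = ∅ := by
      ext T
      constructor
      · rintro ⟨_, h⟩
        obtain ⟨P, hP, _⟩ := h 1 one_pos
        exact hP
      · intro h; exact absurd h (by simp)
    rw [this, Metric.infDist_empty]
  haveI : Nonempty O := hne.to_subtype
  have hEn : ∀ P : O, ∀ E : P.1, ‖E.1‖ ≤ 1 := by
    rintro ⟨P, hP⟩ ⟨E, hE⟩
    obtain ⟨s, t, g1, g2, g3, rfl⟩ := hO.1.1 P hP E hE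
    exact ContinuousNest.norm_proj_le (ContinuousNest.isStarProj_sub ⟨by linarith, by linarith⟩
      ⟨by linarith, by linarith⟩ g2)
  have hbdd : ∀ P : O, BddAbove (range fun E : P.1 => essNorm (E.1 * X * E.1)) := by
    intro P
    refine ⟨‖X‖, ?_⟩
    rintro _ ⟨E, rfl⟩
    exact (essNorm_mul_mul_le _ _ _ (hEn P E) (hEn P E)).trans (essNorm_le_norm X)
  have hnn : ∀ P : O, 0 ≤ ⨆ E : P.1, essNorm (E.1 * X * E.1) :=
    fun P => Real.iSup_nonneg fun E => essNorm_nonneg _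
  have hbb : BddBelow (range fun P : O => ⨆ E : P.1, essNorm (E.1 * X * E.1)) :=
    ⟨0, by rintro _ ⟨P, rfl⟩; exact hnn P⟩
  apply le_antisymm
  · apply le_of_forall_pos_le_add
    intro δ hδ
    set L := ⨅ P : O, ⨆ E : P.1, essNorm (E.1 * X * E.1) with hL
    have hL0 : 0 ≤ L := Real.iInf_nonneg hnn
    obtain ⟨P, hP⟩ := exists_lt_of_ciInf_lt (show L < L + δ / 2 by linarith)
    obtain ⟨Y, hY, hk⟩ := ContinuousNest.exists_approx hO hX P.2 (r := L + δ / 2) (ε := δ / 2)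
      (by linarith) (by linarith)
      (fun E hE => lt_of_le_of_lt (le_ciSup (hbdd P) ⟨E, hE⟩) hP)
    have := Metric.infDist_le_dist_of_mem (x := X) hk
    rw [dist_eq_norm, sub_sub_cancel] at this
    linarith
  · have hker : (𝒩.kernel O).Nonempty := by
      refine ⟨0, ContinuousNest.alg_zero, fun ε hε => ?_⟩
      obtain ⟨P, hP⟩ := hne
      refine ⟨P, hP, fun E _ => ?_⟩
      rw [mul_zero, zero_mul, essNorm_of_cpt cpt_zero]; exact hε
    refine (Metric.le_infDist hker).2 fun T hT => ?_
    apply le_of_forall_pos_le_add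
    intro ε hε
    obtain ⟨P, hP, hPE⟩ := hT.2 ε hε
    refine (ciInf_le hbb ⟨P, hP⟩).trans ?_
    refine Real.iSup_le (fun E => ?_) (by positivity)
    have e : E.1 * X * E.1 = E.1 * (X - T) * E.1 + E.1 * T * E.1 := by noncomm_ring
    rw [e, dist_eq_norm]
    refine (essNorm_add_le _ _).trans (add_le_add ?_ (hPE E.1 E.2).le)
    exact (essNorm_mul_mul_le _ _ _ (hEn ⟨P, hP⟩ E) (hEn ⟨P, hP⟩ E)).trans (essNorm_le_norm _)
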